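/- arXiv:0908.1263 — 2 statements merged into one kernel-verified Lean document; each statement's English description precedes it below -/
import Mathlib

section
/- Let {Ω_i} be a countable partition of ℝⁿ into bounded convex measurable sets with diameters at most D, and let f ∈ W^{1,1}(ℝⁿ). If πf denotes the function equal on each Ω_i to the mean of f over Ω_i, then ‖f − πf‖₁ ≤ (π/2) · D · ‖∇f‖₁. -/
open Filter Topology MeasureTheory

open scoped ENNReal

/-- **Brunn–Minkowski inequality** on the real line. -/
theorem volume_add_le_of_add_mem {A B Z : Set ℝ} (hA : MeasurableSet A) (hB : MeasurableSet B)
    (hA0 : A.Nonempty) (hB0 : B.Nonempty) (h : ∀ x ∈ A, ∀ y ∈ B, x + y ∈ Z) :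
    volume A + volume B ≤ volume Z := by
  have compact_case : ∀ K ⊆ A, IsCompact K → ∀ L ⊆ B, IsCompact L → K.Nonempty → L.Nonempty →
      volume K + volume L ≤ volume Z := by
    intro K hKA hK L hLB hL hK0 hL0
    obtain ⟨k, hk, hkmax⟩ := hK.exists_isMaxOn hK0 continuousOn_id
    obtain ⟨l, hl, hlmin⟩ := hL.exists_isMinOn hL0 continuousOn_id
    have hdisj : AEDisjoint volume ((fun x => x + l) '' K) ((fun y => k + y) '' L) := by
      refine measure_mono_null (t := {k + l}) ?_ (by simp)
      rintro _ ⟨⟨x, hx, rfl⟩, ⟨y, hy, hxy⟩⟩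
      have h1 : x ≤ k := hkmax hx
      have h2 : l ≤ y := hlmin hy
      simp only at hxy
      simp only [Set.mem_singleton_iff]
      linarith
    have hmeas : MeasurableSet ((fun y => k + y) '' L) :=
      (hL.image (by fun_prop)).measurableSet
    calc volume K + volume L
        = volume ((fun x => x + l) '' K) + volume ((fun y => k + y) '' L) := by simp
      _ = volume (((fun x => x + l) '' K) ∪ ((fun y => k + y) '' L)) :=
          (measure_union₀ hmeas.nullMeasurableSet hdisj).symm
      _ ≤ volume Z := by
          refine measure_mono ?_
          rintro _ (⟨x, hx, rfl⟩ | ⟨y, hy, rfl⟩)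
          · exact h _ (hKA hx) _ (hLB hl)
          · exact h _ (hKA hk) _ (hLB hy)
  obtain ⟨a, ha⟩ := hA0
  obtain ⟨b, hb⟩ := hB0
  rw [hA.measure_eq_iSup_isCompact, hB.measure_eq_iSup_isCompact]
  simp only [iSup_and']
  refine ENNReal.biSup_add_biSup_le' (p := fun K => K ⊆ A ∧ IsCompact K)
    (q := fun L => L ⊆ B ∧ IsCompact L) ⟨∅, Set.empty_subset A, isCompact_empty⟩
    ⟨∅, Set.empty_subset B, isCompact_empty⟩ ?_
  rintro K ⟨hKA, hK⟩ L ⟨hLB, hL⟩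
  refine le_trans (by gcongr <;> exact Set.subset_insert _ _)
    (compact_case (insert a K) (Set.insert_subset ha hKA) (hK.insert a)
    (insert b L) (Set.insert_subset hb hLB) (hL.insert b) (by simp) (by simp))

theorem volume_convexComb_le {t : ℝ} (ht0 : 0 < t) (ht1 : t < 1) {A B Z : Set ℝ}
    (hA : MeasurableSet A) (hB : MeasurableSet B)
    (hA0 : A.Nonempty) (hB0 : B.Nonempty) (h : ∀ x ∈ A, ∀ y ∈ B, (1 - t) * x + t * y ∈ Z) :
    ENNReal.ofReal (1 - t) * volume A + ENNReal.ofReal t * volume B ≤ volume Z := by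
  have := volume_add_le_of_add_mem (Z := Z) (hA.const_smul₀ (1 - t)) (hB.const_smul₀ t)
    (hA0.smul_set) (hB0.smul_set) (by
      rintro _ ⟨x, hx, rfl⟩ _ ⟨y, hy, rfl⟩
      exact h x hx y hy)
  simpa [Measure.addHaar_smul, abs_of_pos ht0, abs_of_pos (sub_pos.2 ht1)] using this

theorem ENNReal.rpow_mul_rpow_le {t : ℝ} (ht0 : 0 < t) (ht1 : t < 1) (a b : ℝ≥0∞) :
    a ^ (1 - t) * b ^ t ≤ ENNReal.ofReal (1 - t) * a + ENNReal.ofReal t * b := by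
  have h1 : 0 < 1 - t := sub_pos.2 ht1
  rcases eq_or_ne a ⊤ with rfl | ha
  · rw [ENNReal.mul_top (by simpa using ht1)]; simp
  rcases eq_or_ne b ⊤ with rfl | hb
  · rw [ENNReal.mul_top (by simpa using ht0)]; simp
  lift a to NNReal using ha
  lift b to NNReal using hb
  have := NNReal.geom_mean_le_arith_mean2_weighted ⟨1 - t, h1.le⟩ ⟨t, ht0.le⟩ a b
    (Subtype.ext (sub_add_cancel 1 t))
  rw [← ENNReal.coe_rpow_of_nonneg _ h1.le, ← ENNReal.coe_rpow_of_nonneg _ ht0.le,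
    ENNReal.ofReal_eq_coe_nnreal h1.le, ENNReal.ofReal_eq_coe_nnreal ht0.le]
  exact_mod_cast this

theorem setLIntegral_measure_lt_eq_lintegral_min {h : ℝ → ℝ≥0∞} (hh : Measurable h) :
    ∫⁻ s in Set.Ioo (0 : ℝ) 1, volume {x | ENNReal.ofReal s < h x} = ∫⁻ x, min (h x) 1 := by
  have hfin : ∀ x, min (h x) 1 ≠ ⊤ := fun x => ne_top_of_le_ne_top ENNReal.one_ne_top (min_le_right _ _)
  have key := lintegral_eq_lintegral_meas_lt (f := fun x => (min (h x) 1).toReal) volume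
    (ae_of_all _ fun x => ENNReal.toReal_nonneg) (by fun_prop)
  simp only [ENNReal.ofReal_toReal (hfin _)] at key
  rw [key, ← Set.Ioo_union_Ici_eq_Ioi zero_lt_one,
    lintegral_union measurableSet_Ici (Set.disjoint_left.2 fun x hx hx' => not_lt.2 hx' hx.2)]
  have hzero : ∫⁻ s in Set.Ici (1 : ℝ), volume {x | s < (min (h x) 1).toReal} = 0 := by
    rw [setLIntegral_congr_fun (g := fun _ => 0) measurableSet_Ici, lintegral_zero]
    intro s hs
    have : {x | s < (min (h x) 1).toReal} = ∅ := by
      ext x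
      simp only [Set.mem_ofPred_eq, Set.mem_empty_iff_false, iff_false, not_lt]
      refine le_trans (ENNReal.toReal_mono ENNReal.one_ne_top (min_le_right _ _)) ?_
      simpa using hs
    simp [this]
  rw [hzero, add_zero]
  refine setLIntegral_congr_fun measurableSet_Ioo fun s hs => ?_
  congr 1
  ext x
  simp only [Set.mem_ofPred_eq]
  rw [← ENNReal.ofReal_lt_iff_lt_toReal hs.1.le (hfin x), lt_min_iff]
  simp [hs.2]

theorem prekopaLeindler_real_normalized {t : ℝ} (ht0 : 0 < t) (ht1 : t < 1) {f g h : ℝ → ℝ≥0∞}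
    (hf : Measurable f) (hg : Measurable g) (hh : Measurable h)
    (hf1 : ⨆ x, f x = 1) (hg1 : ⨆ x, g x = 1)
    (hfgh : ∀ x y, f x ^ (1 - t) * g y ^ t ≤ h ((1 - t) * x + t * y)) :
    (∫⁻ x, f x) ^ (1 - t) * (∫⁻ x, g x) ^ t ≤ ∫⁻ x, h x := by
  refine (ENNReal.rpow_mul_rpow_le ht0 ht1 _ _).trans ?_
  have hf_eq : ∫⁻ x, f x = ∫⁻ x, min (f x) 1 :=
    lintegral_congr fun x => (min_eq_left (hf1 ▸ le_iSup f x)).symm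
  have hg_eq : ∫⁻ x, g x = ∫⁻ x, min (g x) 1 :=
    lintegral_congr fun x => (min_eq_left (hg1 ▸ le_iSup g x)).symm
  refine le_trans ?_ (lintegral_mono fun x => min_le_left (h x) 1)
  have hanti : ∀ k : ℝ → ℝ≥0∞, Measurable fun s : ℝ => volume {x | ENNReal.ofReal s < k x} :=
    fun k => Antitone.measurable fun a b hab => measure_mono fun x hx =>
      lt_of_le_of_lt (ENNReal.ofReal_le_ofReal hab) hx
  rw [hf_eq, hg_eq, ← setLIntegral_measure_lt_eq_lintegral_min hf,
    ← setLIntegral_measure_lt_eq_lintegral_min hg, ← setLIntegral_measure_lt_eq_lintegral_min hh,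
    ← lintegral_const_mul _ (hanti f), ← lintegral_const_mul _ (hanti g),
    ← lintegral_add_left ((hanti f).const_mul _)]
  refine setLIntegral_mono' measurableSet_Ioo fun s hs => ?_
  have hs1 : ENNReal.ofReal s < 1 := by simpa using hs.2
  have hs0 : ENNReal.ofReal s ≠ 0 := by simpa using hs.1
  refine volume_convexComb_le ht0 ht1 (measurableSet_lt measurable_const hf)
    (measurableSet_lt measurable_const hg) (Set.nonempty_def.2 (lt_iSup_iff.1 (hs1.trans_eq hf1.symm)))
    (Set.nonempty_def.2 (lt_iSup_iff.1 (hs1.trans_eq hg1.symm))) fun x hx y hy => ?_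
  refine lt_of_lt_of_le ?_ (hfgh x y)
  calc ENNReal.ofReal s = ENNReal.ofReal s ^ (1 - t) * ENNReal.ofReal s ^ t := by
        rw [← ENNReal.rpow_add _ _ hs0 ENNReal.ofReal_ne_top]; simp
    _ < f x ^ (1 - t) * g y ^ t :=
        ENNReal.mul_lt_mul (ENNReal.rpow_lt_rpow hx (sub_pos.2 ht1)) (ENNReal.rpow_lt_rpow hy ht0)

theorem prekopaLeindler_real_of_bounded {t : ℝ} (ht0 : 0 < t) (ht1 : t < 1) {f g h : ℝ → ℝ≥0∞}
    (hf : Measurable f) (hg : Measurable g) (hh : Measurable h)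
    (hf1 : ⨆ x, f x ≠ ⊤) (hg1 : ⨆ x, g x ≠ ⊤)
    (hfgh : ∀ x y, f x ^ (1 - t) * g y ^ t ≤ h ((1 - t) * x + t * y)) :
    (∫⁻ x, f x) ^ (1 - t) * (∫⁻ x, g x) ^ t ≤ ∫⁻ x, h x := by
  have h1t : 0 < 1 - t := sub_pos.2 ht1
  set a := ⨆ x, f x with ha
  set b := ⨆ x, g x with hb
  rcases eq_or_ne a 0 with ha0 | ha0
  · have : ∀ x, f x = 0 := by simpa [ha] using ha0
    simp [this, h1t]
  rcases eq_or_ne b 0 with hb0 | hb0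
  · have : ∀ x, g x = 0 := by simpa [hb] using hb0
    simp [this, ht0]
  set c := a ^ (1 - t) * b ^ t with hc
  have hc0 : c ≠ 0 := mul_ne_zero (by simp [ha0, hf1]) (by simp [hb0, hg1])
  have hcT : c ≠ ⊤ := ENNReal.mul_ne_top (ENNReal.rpow_ne_top_of_nonneg h1t.le hf1)
    (ENNReal.rpow_ne_top_of_nonneg ht0.le hg1)
  have hscale : ∀ u v : ℝ≥0∞, (a⁻¹ * u) ^ (1 - t) * (b⁻¹ * v) ^ t
      = c⁻¹ * (u ^ (1 - t) * v ^ t) := by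
    intro u v
    rw [ENNReal.mul_rpow_of_nonneg _ _ h1t.le, ENNReal.mul_rpow_of_nonneg _ _ ht0.le, hc,
      ENNReal.mul_inv (by simp [ha0, hf1]) (by simp [ha0, hf1]), ENNReal.inv_rpow,
      ENNReal.inv_rpow]
    ring
  have key := prekopaLeindler_real_normalized ht0 ht1 (hf.const_mul a⁻¹) (hg.const_mul b⁻¹)
    (hh.const_mul c⁻¹)
    (by rw [← ENNReal.mul_iSup]; exact ENNReal.inv_mul_cancel ha0 hf1)
    (by rw [← ENNReal.mul_iSup]; exact ENNReal.inv_mul_cancel hb0 hg1)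
    (fun x y => by rw [hscale]; gcongr; exact hfgh x y)
  rw [lintegral_const_mul _ hf, lintegral_const_mul _ hg, lintegral_const_mul _ hh, hscale] at key
  exact (ENNReal.mul_le_mul_iff_right (by simpa using hcT) (by simpa using hc0)).1 key

theorem lintegral_eq_iSup_lintegral_min {X : Type*} [MeasurableSpace X] (μ : Measure X)
    {f : X → ℝ≥0∞} (hf : Measurable f) :
    ∫⁻ x, f x ∂μ = ⨆ N : ℕ, ∫⁻ x, min (f x) N ∂μ := by
  rw [← lintegral_iSup (f := fun (N : ℕ) x => min (f x) N) (fun N => by fun_prop)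
    (fun N M hNM x => min_le_min_left _ (by exact_mod_cast hNM))]
  refine lintegral_congr fun x => ?_
  rw [← inf_iSup_eq, ENNReal.iSup_natCast, inf_top_eq]

/-- **Prékopa–Leindler inequality** on the real line. -/
theorem prekopaLeindler_real {t : ℝ} (ht0 : 0 < t) (ht1 : t < 1) {f g h : ℝ → ℝ≥0∞}
    (hf : Measurable f) (hg : Measurable g) (hh : Measurable h)
    (hfgh : ∀ x y, f x ^ (1 - t) * g y ^ t ≤ h ((1 - t) * x + t * y)) :
    (∫⁻ x, f x) ^ (1 - t) * (∫⁻ x, g x) ^ t ≤ ∫⁻ x, h x := by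
  have h1t : 0 < 1 - t := sub_pos.2 ht1
  have hpow : ∀ {p : ℝ} (_ : 0 < p) (u : ℕ → ℝ≥0∞), (⨆ N, u N) ^ p = ⨆ N, u N ^ p :=
    fun hp u => (ENNReal.orderIsoRpow _ hp).map_iSup u
  rw [lintegral_eq_iSup_lintegral_min _ hf, lintegral_eq_iSup_lintegral_min _ hg, hpow h1t,
    hpow ht0, ENNReal.iSup_mul]
  refine iSup_le fun N => ?_
  rw [ENNReal.mul_iSup]
  refine iSup_le fun M => ?_
  refine prekopaLeindler_real_of_bounded ht0 ht1 (by fun_prop) (by fun_prop) hh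
    (ne_top_of_le_ne_top (ENNReal.natCast_ne_top N) (iSup_le fun x => min_le_right _ _))
    (ne_top_of_le_ne_top (ENNReal.natCast_ne_top M) (iSup_le fun x => min_le_right _ _))
    fun x y => le_trans ?_ (hfgh x y)
  gcongr <;> exact min_le_left _ _

/-- **Prékopa–Leindler inequality** on `Fin n → ℝ`. -/
theorem prekopaLeindler_pi {t : ℝ} (ht0 : 0 < t) (ht1 : t < 1) (n : ℕ) :
    ∀ {f g h : (Fin n → ℝ) → ℝ≥0∞}, Measurable f → Measurable g → Measurable h →
    (∀ x y, f x ^ (1 - t) * g y ^ t ≤ h ((1 - t) • x + t • y)) →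
    (∫⁻ x, f x) ^ (1 - t) * (∫⁻ x, g x) ^ t ≤ ∫⁻ x, h x := by
  induction n with
  | zero =>
    intro f g h _ _ _ hfgh
    have hint : ∀ k : (Fin 0 → ℝ) → ℝ≥0∞, ∫⁻ x, k x = k 0 := fun k => by
      rw [lintegral_unique, volume_pi, Measure.pi_of_empty, measure_univ, mul_one]
      exact congrArg k (Subsingleton.elim _ _)
    simp only [hint]
    exact (hfgh 0 0).trans (by simp)
  | succ n ih =>
    intro f g h hf hg hh hfgh
    let e := (MeasurableEquiv.piFinSuccAbove (fun _ : Fin (n + 1) => ℝ) 0).symm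
    have he : MeasurePreserving e volume volume :=
      (volume_preserving_piFinSuccAbove (fun _ : Fin (n + 1) => ℝ) 0).symm _
    have hecomb : ∀ (p q : ℝ × (Fin n → ℝ)),
        e ((1 - t) * p.1 + t * q.1, (1 - t) • p.2 + t • q.2) = (1 - t) • e p + t • e q := by
      intro p q
      ext i
      refine Fin.cases ?_ (fun j => ?_) i <;> simp [e, MeasurableEquiv.piFinSuccAbove]
    have hint : ∀ k : (Fin (n + 1) → ℝ) → ℝ≥0∞, Measurable k →
        ∫⁻ x, k x = ∫⁻ a, ∫⁻ y, k (e (a, y)) := fun k hk => by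
      rw [← he.lintegral_comp hk]
      exact lintegral_prod _ (hk.comp e.measurable).aemeasurable
    rw [hint f hf, hint g hg, hint h hh]
    refine prekopaLeindler_real ht0 ht1
      (Measurable.lintegral_prod_right' (hf.comp e.measurable))
      (Measurable.lintegral_prod_right' (hg.comp e.measurable))
      (Measurable.lintegral_prod_right' (hh.comp e.measurable)) fun a b => ?_
    refine ih (by fun_prop) (by fun_prop) (by fun_prop) fun x y => ?_
    rw [hecomb (a, x) (b, y)]
    exact hfgh _ _

/-- **Brunn–Minkowski inequality** in Euclidean space, in multiplicative form. -/
theorem EuclideanSpace.volume_rpow_mul_le {n : ℕ} {t : ℝ} (ht0 : 0 < t) (ht1 : t < 1)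
    {A B Z : Set (EuclideanSpace ℝ (Fin n))} (hA : MeasurableSet A) (hB : MeasurableSet B)
    (hZ : MeasurableSet Z) (h : ∀ x ∈ A, ∀ y ∈ B, (1 - t) • x + t • y ∈ Z) :
    volume A ^ (1 - t) * volume B ^ t ≤ volume Z := by
  have hpres := PiLp.volume_preserving_toLp (Fin n)
  have hvol : ∀ S : Set (EuclideanSpace ℝ (Fin n)), MeasurableSet S → volume S =
      ∫⁻ x : Fin n → ℝ, S.indicator 1 (WithLp.toLp 2 x) := fun S hS => by
    rw [hpres.lintegral_comp (measurable_one.indicator hS), lintegral_indicator_one hS]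
  rw [hvol A hA, hvol B hB, hvol Z hZ]
  refine prekopaLeindler_pi ht0 ht1 n ((measurable_one.indicator hA).comp hpres.measurable)
    ((measurable_one.indicator hB).comp hpres.measurable)
    ((measurable_one.indicator hZ).comp hpres.measurable) fun x y => ?_
  by_cases hx : WithLp.toLp 2 x ∈ A
  · by_cases hy : WithLp.toLp 2 y ∈ B
    · have := h _ hx _ hy
      simp_all
    · simp [hy, ht0]
  · simp [hx, ht1]

/-- Truncation of the series of `-a * log a` around `a = 1`; it bounds `-a * log a` from below. -/
noncomputable def entropyMinorant (a : ℝ) : ℝ :=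
  a * ((1 - a) + (1 - a) ^ 2 / 2 + (1 - a) ^ 3 / 3)

theorem continuous_entropyMinorant : Continuous entropyMinorant := by
  unfold entropyMinorant; fun_prop

theorem sum_le_neg_log {a : ℝ} (ha0 : 0 < a) (ha1 : a ≤ 1) :
    (1 - a) + (1 - a) ^ 2 / 2 + (1 - a) ^ 3 / 3 ≤ -Real.log a := by
  have hs := Real.hasSum_pow_div_log_of_abs_lt_one (x := 1 - a)
    (by rw [abs_of_nonneg (by linarith)]; linarith)
  have := sum_le_hasSum (Finset.range 3)
    (fun i _ => div_nonneg (pow_nonneg (sub_nonneg.2 ha1) _) (by positivity)) hs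
  norm_num [Finset.sum_range_succ] at this
  linarith

theorem add_entropyMinorant_le_rpow {t : ℝ} (ht0 : 0 < t) {a : ℝ}
    (ha0 : 0 < a) (ha1 : a ≤ 1) : a + t * entropyMinorant a ≤ a ^ (1 - t) := by
  have hexp : 1 + t * -Real.log a ≤ a ^ (-t) := by
    rw [Real.rpow_def_of_pos ha0]
    linarith [Real.add_one_le_exp (Real.log a * -t)]
  rw [show 1 - t = 1 + -t by ring, Real.rpow_add ha0, Real.rpow_one, entropyMinorant]
  have := sum_le_neg_log ha0 ha1
  calc _ = a * (1 + t * ((1 - a) + (1 - a) ^ 2 / 2 + (1 - a) ^ 3 / 3)) := by ring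
    _ ≤ a * (1 + t * -Real.log a) := by gcongr
    _ ≤ _ := by gcongr

theorem entropyMinorant_nonneg {a : ℝ} (ha0 : 0 ≤ a) (ha1 : a ≤ 1) : 0 ≤ entropyMinorant a := by
  have : 0 ≤ 1 - a := sub_nonneg.2 ha1
  unfold entropyMinorant
  positivity

theorem mul_le_entropyMinorant_add {a b : ℝ} (ha : 0 ≤ a) (hb : 0 ≤ b) (hab : a + b ≤ 1) :
    8 / 3 * (a * b) ≤ entropyMinorant a + entropyMinorant b := by
  obtain ⟨p, hp⟩ : ∃ p, p = 1 - a := ⟨_, rfl⟩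
  obtain ⟨q, hq⟩ : ∃ q, q = 1 - b := ⟨_, rfl⟩
  have hp' : b ≤ p := by linarith
  have hq' : a ≤ q := by linarith
  have hpq : 1 ≤ p + q := by linarith
  have h1 : a * b * (1 + p / 2 + p ^ 2 / 3) ≤ entropyMinorant a := by
    have hp0 : 0 ≤ p := hb.trans hp'
    rw [entropyMinorant, ← hp]
    calc _ ≤ a * p * (1 + p / 2 + p ^ 2 / 3) := by gcongr
      _ = _ := by ring
  have h2 : a * b * (1 + q / 2 + q ^ 2 / 3) ≤ entropyMinorant b := by
    have hq0 : 0 ≤ q := ha.trans hq'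
    rw [entropyMinorant, ← hq]
    calc _ ≤ q * b * (1 + q / 2 + q ^ 2 / 3) := by gcongr
      _ = _ := by ring
  have h3 : 8 / 3 ≤ (1 + p / 2 + p ^ 2 / 3) + (1 + q / 2 + q ^ 2 / 3) := by
    nlinarith [sq_nonneg (p - q), sq_nonneg (p + q - 1)]
  nlinarith [mul_le_mul_of_nonneg_left h3 (mul_nonneg ha hb)]

theorem measure_add_entropyMinorant_le_rpow {X : Type*} [MeasurableSpace X] (ν : Measure X)
    [IsProbabilityMeasure ν] {t : ℝ} (ht0 : 0 < t) (ht1 : t < 1) (A : Set X) :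
    ν A + ENNReal.ofReal t * ENNReal.ofReal (entropyMinorant (ν.real A)) ≤ ν A ^ (1 - t) := by
  have h1t : 0 < 1 - t := sub_pos.2 ht1
  rcases eq_or_ne (ν A) 0 with h0 | h0
  · simp [h0, measureReal_def, entropyMinorant]
  have hpos : 0 < ν.real A := ENNReal.toReal_pos h0 (measure_ne_top _ _)
  have hle : ν.real A ≤ 1 := measureReal_le_one
  rw [← ofReal_measureReal (μ := ν) (s := A), ENNReal.ofReal_rpow_of_pos hpos,
    ← ENNReal.ofReal_mul ht0.le,
    ← ENNReal.ofReal_add hpos.le (mul_nonneg ht0.le (entropyMinorant_nonneg hpos.le hle))]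
  exact ENNReal.ofReal_le_ofReal (add_entropyMinorant_le_rpow ht0 hpos hle)

section Cell

variable {n : ℕ} {Ω : Set (EuclideanSpace ℝ (Fin n))}

theorem cond_rpow_le_cond {t : ℝ} (ht0 : 0 < t) (ht1 : t < 1) (hm : MeasurableSet Ω)
    (hc : Convex ℝ Ω) (h0 : volume Ω ≠ 0) (hT : volume Ω ≠ ⊤)
    {A Z : Set (EuclideanSpace ℝ (Fin n))} (hA : MeasurableSet A) (hZ : MeasurableSet Z)
    (h : ∀ x ∈ Ω, x ∈ A → ∀ y ∈ Ω, (1 - t) • x + t • y ∈ Z) :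
    ProbabilityTheory.cond volume Ω A ^ (1 - t) ≤ ProbabilityTheory.cond volume Ω Z := by
  have h1t : 0 < 1 - t := sub_pos.2 ht1
  rw [ProbabilityTheory.cond_apply hm, ProbabilityTheory.cond_apply hm]
  have key := EuclideanSpace.volume_rpow_mul_le ht0 ht1 (hm.inter hA) hm (hm.inter hZ)
    (fun x hx y hy => ⟨hc hx.1 hy h1t.le ht0.le (by ring), h x hx.1 hx.2 y hy⟩)
  have hinv : (volume Ω)⁻¹ ^ (1 - t) = (volume Ω)⁻¹ * volume Ω ^ t := by
    rw [ENNReal.inv_rpow, ENNReal.rpow_sub _ _ h0 hT, ENNReal.rpow_one,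
      ENNReal.inv_div (by simp [h0, hT]) (by simp [h0, hT]), mul_comm, div_eq_mul_inv]
  rw [ENNReal.mul_rpow_of_nonneg _ _ h1t.le, hinv, mul_assoc]
  gcongr
  rwa [mul_comm]

theorem exists_le_add_fderiv_mul_dist (hb : Bornology.IsBounded Ω) (hc : Convex ℝ Ω)
    {u : EuclideanSpace ℝ (Fin n) → ℝ} (hu : ContDiff ℝ 1 u) {η : ℝ} (hη : 0 < η) :
    ∃ δ > 0, ∀ x ∈ Ω, ∀ z ∈ Ω, dist x z < δ → u x ≤ u z + (‖fderiv ℝ u z‖ + η) * dist x z := by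
  have huc := hb.isCompact_closure.uniformContinuousOn_of_continuous
    (hu.continuous_fderiv one_ne_zero).continuousOn
  obtain ⟨δ, hδ, hδu⟩ := Metric.uniformContinuousOn_iff.1 huc η hη
  refine ⟨δ, hδ, fun x hx z hz hxz => ?_⟩
  have hbound : ∀ y ∈ Ω ∩ Metric.ball z δ, ‖fderiv ℝ u y‖ ≤ ‖fderiv ℝ u z‖ + η := by
    intro y hy
    have h1 := hδu y (subset_closure hy.1) z (subset_closure hz) hy.2
    rw [dist_eq_norm] at h1
    linarith [norm_le_norm_add_norm_sub' (fderiv ℝ u y) (fderiv ℝ u z)]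
  have := (hc.inter (convex_ball z δ)).norm_image_sub_le_of_norm_fderiv_le (𝕜 := ℝ)
    (fun y _ => (hu.differentiable one_ne_zero) y) hbound ⟨hz, Metric.mem_ball_self hδ⟩ ⟨hx, hxz⟩
  rw [← dist_eq_norm, ← dist_eq_norm, Real.dist_eq] at this
  linarith [le_abs_self (u x - u z)]

theorem setLIntegral_entropyMinorant_le (hm : MeasurableSet Ω) (hb : Bornology.IsBounded Ω)
    (hc : Convex ℝ Ω) (h0 : volume Ω ≠ 0) {D : ℝ} (hD0 : 0 ≤ D)
    (hD : Metric.diam Ω ≤ D) {u : EuclideanSpace ℝ (Fin n) → ℝ} (hu : ContDiff ℝ 1 u)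
    (hu0 : ∀ x ∈ Ω, 0 ≤ u x) :
    ∫⁻ s in Set.Ioi (0 : ℝ), ENNReal.ofReal
        (entropyMinorant ((ProbabilityTheory.cond volume Ω).real {x | s < u x}))
      ≤ ENNReal.ofReal D * ∫⁻ x, ‖fderiv ℝ u x‖ₑ ∂(ProbabilityTheory.cond volume Ω) := by
  have hT : volume Ω ≠ ⊤ := hb.measure_lt_top.ne
  set ν := ProbabilityTheory.cond volume Ω with hν
  have : IsProbabilityMeasure ν := ProbabilityTheory.cond_isProbabilityMeasure_of_finite h0 hT
  have hae : ∀ᵐ x ∂ν, x ∈ Ω := ProbabilityTheory.ae_cond_mem hm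
  have hcu : Continuous u := hu.continuous
  have hcd : Continuous (fderiv ℝ u) := hu.continuous_fderiv one_ne_zero
  have hanti : ∀ k : EuclideanSpace ℝ (Fin n) → ℝ, Measurable fun s : ℝ => ν {x | s < k x} :=
    fun k => Antitone.measurable fun a b hab => measure_mono fun x hx => lt_of_le_of_lt hab hx
  have hufin : ∫⁻ x, ENNReal.ofReal (u x) ∂ν ≠ ⊤ := by
    obtain ⟨M, hM⟩ := hb.isCompact_closure.bddAbove_image hcu.continuousOn
    refine ne_top_of_le_ne_top (b := ∫⁻ _, ENNReal.ofReal M ∂ν) (by simp) (lintegral_mono_ae ?_)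
    filter_upwards [hae] with x hx
    exact ENNReal.ofReal_le_ofReal (hM ⟨x, subset_closure hx, rfl⟩)
  have approx : ∀ η : ℝ, 0 < η → ∫⁻ s in Set.Ioi (0 : ℝ), ENNReal.ofReal
      (entropyMinorant (ν.real {x | s < u x}))
      ≤ ENNReal.ofReal D * (∫⁻ x, ‖fderiv ℝ u x‖ₑ ∂ν + ENNReal.ofReal η) := by
    intro η hη
    obtain ⟨δ, hδ, hδu⟩ := exists_le_add_fderiv_mul_dist hb hc hu hη
    obtain ⟨t, ht0, ht⟩ : ∃ t : ℝ, 0 < t ∧ t < min 1 (δ / (D + 1)) :=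
      exists_between (lt_min one_pos (by positivity))
    have ht1 : t < 1 := ht.trans_le (min_le_left _ _)
    have htD : t * D < δ := by
      have := (lt_div_iff₀ (by positivity)).1 (ht.trans_le (min_le_right _ _))
      nlinarith
    set w : EuclideanSpace ℝ (Fin n) → ℝ := fun z => u z + t * D * (‖fderiv ℝ u z‖ + η) with hw
    have hcw : Continuous w := by fun_prop
    have hcomp : ∀ s : ℝ, ν {x | s < u x} ^ (1 - t) ≤ ν {x | s < w x} := by
      intro s
      refine cond_rpow_le_cond ht0 ht1 hm hc h0 hT (measurableSet_lt measurable_const hcu.measurable)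
        (measurableSet_lt measurable_const hcw.measurable) fun x hx hxs y hy => ?_
      have hz : (1 - t) • x + t • y ∈ Ω := hc hx hy (by linarith) ht0.le (by ring)
      have hdist : dist x ((1 - t) • x + t • y) ≤ t * D := by
        rw [dist_eq_norm, show x - ((1 - t) • x + t • y) = t • (x - y) by module, norm_smul,
          Real.norm_of_nonneg ht0.le, ← dist_eq_norm]
        gcongr
        exact (Metric.dist_le_diam_of_mem hb hx hy).trans hD
      have h1 := hδu x hx _ hz (hdist.trans_lt htD)
      have hxs' : s < u x := hxs
      refine hxs'.trans_le (h1.trans ?_)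
      simp only [hw]
      rw [mul_comm (t * D)]
      gcongr
    have hlay_u := lintegral_eq_lintegral_meas_lt ν (f := u)
      (by filter_upwards [hae] with x hx using hu0 x hx) hcu.aemeasurable
    have hlay_w := lintegral_eq_lintegral_meas_lt ν (f := w)
      (by
        filter_upwards [hae] with x hx
        have := hu0 x hx
        simp only [hw, Pi.zero_apply]
        positivity) hcw.aemeasurable
    have hw_int : ∫⁻ x, ENNReal.ofReal (w x) ∂ν = ∫⁻ x, ENNReal.ofReal (u x) ∂ν +
        ENNReal.ofReal t * (ENNReal.ofReal D * (∫⁻ x, ‖fderiv ℝ u x‖ₑ ∂ν + ENNReal.ofReal η)) := by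
      have hpt : ∀ᵐ x ∂ν, ENNReal.ofReal (w x) = ENNReal.ofReal (u x) +
          ENNReal.ofReal t * (ENNReal.ofReal D * (‖fderiv ℝ u x‖ₑ + ENNReal.ofReal η)) := by
        filter_upwards [hae] with x hx
        rw [hw, ENNReal.ofReal_add (hu0 x hx) (by positivity), mul_assoc,
          ENNReal.ofReal_mul ht0.le, ENNReal.ofReal_mul hD0,
          ENNReal.ofReal_add (norm_nonneg _) hη.le, ofReal_norm]
      rw [lintegral_congr_ae hpt, lintegral_add_left (by fun_prop),
        lintegral_const_mul _ (by fun_prop), lintegral_const_mul _ (by fun_prop),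
        lintegral_add_left (by fun_prop)]
      simp
    have hsum : ∫⁻ x, ENNReal.ofReal (u x) ∂ν + ENNReal.ofReal t *
        ∫⁻ s in Set.Ioi (0 : ℝ), ENNReal.ofReal (entropyMinorant (ν.real {x | s < u x}))
        ≤ ∫⁻ x, ENNReal.ofReal (w x) ∂ν := by
      rw [hlay_u, hlay_w, ← lintegral_const_mul' _ _ ENNReal.ofReal_ne_top,
        ← lintegral_add_left (hanti u)]
      exact lintegral_mono fun s =>
        (measure_add_entropyMinorant_le_rpow ν ht0 ht1 _).trans (hcomp s)
    rw [hw_int] at hsum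
    have := (ENNReal.add_le_add_iff_left hufin).1 hsum
    exact (ENNReal.mul_le_mul_iff_right (by simpa using ht0) ENNReal.ofReal_ne_top).1 this
  have hlim : Tendsto (fun η : ℝ => ENNReal.ofReal D *
      (∫⁻ x, ‖fderiv ℝ u x‖ₑ ∂ν + ENNReal.ofReal η)) (𝓝[>] 0)
      (𝓝 (ENNReal.ofReal D * (∫⁻ x, ‖fderiv ℝ u x‖ₑ ∂ν + ENNReal.ofReal 0))) := by
    refine ENNReal.Tendsto.const_mul ?_ (Or.inr ENNReal.ofReal_ne_top)
    exact tendsto_const_nhds.add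
      ((ENNReal.continuous_ofReal.tendsto 0).mono_left nhdsWithin_le_nhds)
  rw [ENNReal.ofReal_zero, add_zero] at hlim
  exact ge_of_tendsto hlim (eventually_nhdsWithin_of_forall approx)

theorem lintegral_entropyMinorant_le (hm : MeasurableSet Ω) (hb : Bornology.IsBounded Ω)
    (hc : Convex ℝ Ω) (h0 : volume Ω ≠ 0) {D : ℝ} (hD0 : 0 ≤ D)
    (hD : Metric.diam Ω ≤ D) {g : EuclideanSpace ℝ (Fin n) → ℝ} (hg : ContDiff ℝ 1 g) :
    ∫⁻ s : ℝ, ENNReal.ofReal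
        (entropyMinorant ((ProbabilityTheory.cond volume Ω).real {x | s < g x}))
      ≤ ENNReal.ofReal D * ∫⁻ x, ‖fderiv ℝ g x‖ₑ ∂(ProbabilityTheory.cond volume Ω) := by
  have hT : volume Ω ≠ ⊤ := hb.measure_lt_top.ne
  set ν := ProbabilityTheory.cond volume Ω with hν
  have : IsProbabilityMeasure ν := ProbabilityTheory.cond_isProbabilityMeasure_of_finite h0 hT
  obtain ⟨m, hm'⟩ := hb.isCompact_closure.bddBelow_image hg.continuous.continuousOn
  have hlow : ∀ x ∈ Ω, m ≤ g x := fun x hx => hm' ⟨x, subset_closure hx, rfl⟩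
  have key := setLIntegral_entropyMinorant_le hm hb hc h0 hD0 hD
    (u := fun x => g x + (1 - m)) (hg.add contDiff_const)
    (fun x hx => by linarith [hlow x hx])
  simp only [fderiv_add_const] at key
  refine le_trans (le_of_eq ?_) key
  rw [← lintegral_sub_right_eq_self _ (1 - m), ← lintegral_indicator measurableSet_Ioi]
  refine lintegral_congr fun s => ?_
  have hset : {x | s - (1 - m) < g x} = {x | s < g x + (1 - m)} := by
    ext x
    simp only [Set.mem_ofPred_eq, sub_lt_iff_lt_add]
  rw [hset]
  by_cases hs : 0 < s
  · rw [Set.indicator_of_mem (Set.mem_Ioi.2 hs)]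
  · rw [Set.indicator_of_notMem (by simpa using hs)]
    have hfull : ν.real {x | s < g x + (1 - m)} = 1 := by
      have : ∀ᵐ x ∂ν, s < g x + (1 - m) := by
        filter_upwards [ProbabilityTheory.ae_cond_mem hm] with x hx
        linarith [hlow x hx]
      rw [measureReal_congr (t := Set.univ) (eventuallyEq_univ.2 this), probReal_univ]
    rw [hfull]
    simp [entropyMinorant]

theorem lintegral_lintegral_sub_eq {X : Type*} [MeasurableSpace X] (ν : Measure X)
    [IsProbabilityMeasure ν] {g : X → ℝ} (hg : Measurable g) :
    ∫⁻ x, ∫⁻ y, ENNReal.ofReal (g x - g y) ∂ν ∂ν =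
      ∫⁻ s : ℝ, ν {x | s < g x} * ν {x | g x < s} := by
  have hU : MeasurableSet {q : X × ℝ | q.2 < g q.1} :=
    measurableSet_lt measurable_snd (hg.comp measurable_fst)
  have hL : MeasurableSet {q : X × ℝ | g q.1 < q.2} :=
    measurableSet_lt (hg.comp measurable_fst) measurable_snd
  let U : X × ℝ → ℝ≥0∞ := {q : X × ℝ | q.2 < g q.1}.indicator 1
  let L : X × ℝ → ℝ≥0∞ := {q : X × ℝ | g q.1 < q.2}.indicator 1
  have hUm : Measurable U := measurable_one.indicator hU
  have hLm : Measurable L := measurable_one.indicator hL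
  have hpt : ∀ x y, ENNReal.ofReal (g x - g y) = ∫⁻ s : ℝ, U (x, s) * L (y, s) := by
    intro x y
    rw [← Real.volume_Ioo, ← lintegral_indicator_one measurableSet_Ioo]
    refine lintegral_congr fun s => ?_
    by_cases h1 : s < g x <;> by_cases h2 : g y < s <;> simp [h1, h2, U, L]
  have hUint : ∀ s : ℝ, ∫⁻ x, U (x, s) ∂ν = ν {x | s < g x} := fun s =>
    lintegral_indicator_one (measurableSet_lt measurable_const hg)
  have hLint : ∀ s : ℝ, ∫⁻ y, L (y, s) ∂ν = ν {x | g x < s} := fun s =>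
    lintegral_indicator_one (measurableSet_lt hg measurable_const)
  have hLs : Measurable fun s : ℝ => ν {x | g x < s} :=
    Monotone.measurable fun a b hab => measure_mono fun x hx => lt_of_lt_of_le hx hab
  calc ∫⁻ x, ∫⁻ y, ENNReal.ofReal (g x - g y) ∂ν ∂ν
      = ∫⁻ x, (∫⁻ s : ℝ, U (x, s) * ν {x | g x < s}) ∂ν := by
        refine lintegral_congr fun x => ?_
        simp only [hpt]
        rw [lintegral_lintegral_swap (by fun_prop)]
        refine lintegral_congr fun s => ?_
        rw [lintegral_const_mul _ (by fun_prop), hLint]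
    _ = ∫⁻ s : ℝ, ν {x | s < g x} * ν {x | g x < s} := by
        rw [lintegral_lintegral_swap
          (hUm.mul (hLs.comp measurable_snd)).aemeasurable]
        refine lintegral_congr fun s => ?_
        rw [lintegral_mul_const _ (by fun_prop), hUint]

theorem lintegral_lintegral_sub_le (hm : MeasurableSet Ω) (hb : Bornology.IsBounded Ω)
    (hc : Convex ℝ Ω) (h0 : volume Ω ≠ 0) {D : ℝ} (hD0 : 0 ≤ D)
    (hD : Metric.diam Ω ≤ D) {g : EuclideanSpace ℝ (Fin n) → ℝ} (hg : ContDiff ℝ 1 g) :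
    ∫⁻ x, ∫⁻ y, ENNReal.ofReal (g x - g y) ∂(ProbabilityTheory.cond volume Ω)
        ∂(ProbabilityTheory.cond volume Ω)
      ≤ ENNReal.ofReal (3 / 4 * D) *
        ∫⁻ x, ‖fderiv ℝ g x‖ₑ ∂(ProbabilityTheory.cond volume Ω) := by
  have hT : volume Ω ≠ ⊤ := hb.measure_lt_top.ne
  have h1 := lintegral_entropyMinorant_le hm hb hc h0 hD0 hD hg
  have h2 := lintegral_entropyMinorant_le hm hb hc h0 hD0 hD hg.neg
  simp only [fderiv_fun_neg, enorm_neg] at h2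
  set ν := ProbabilityTheory.cond volume Ω with hν
  have : IsProbabilityMeasure ν := ProbabilityTheory.cond_isProbabilityMeasure_of_finite h0 hT
  rw [← lintegral_neg_eq_self] at h2
  simp only [neg_lt_neg_iff] at h2
  have hmeas : Measurable fun s : ℝ => ENNReal.ofReal (entropyMinorant (ν.real {x | s < g x})) := by
    refine ENNReal.measurable_ofReal.comp (continuous_entropyMinorant.measurable.comp ?_)
    exact Antitone.measurable fun a b hab =>
      measureReal_mono fun x hx => lt_of_le_of_lt hab hx
  have hprod : ENNReal.ofReal (8 / 3) * ∫⁻ s : ℝ, ν {x | s < g x} * ν {x | g x < s} ≤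
      2 * (ENNReal.ofReal D * ∫⁻ x, ‖fderiv ℝ g x‖ₑ ∂ν) := by
    rw [two_mul, ← lintegral_const_mul' _ _ ENNReal.ofReal_ne_top]
    refine le_trans ?_ (add_le_add h1 h2)
    rw [← lintegral_add_left hmeas]
    refine lintegral_mono fun s => ?_
    have hle : ν.real {x | s < g x} + ν.real {x | g x < s} ≤ 1 := by
      rw [← measureReal_union (μ := ν) (s₁ := {x | s < g x}) (s₂ := {x | g x < s})
        (Set.disjoint_left.2 fun x (hx : s < g x) hx' => lt_asymm hx hx')
        (measurableSet_lt hg.continuous.measurable measurable_const)]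
      exact measureReal_le_one
    rw [← ofReal_measureReal, ← ofReal_measureReal, ← ENNReal.ofReal_mul measureReal_nonneg,
      ← ENNReal.ofReal_mul (by norm_num), ← ENNReal.ofReal_add
        (entropyMinorant_nonneg measureReal_nonneg measureReal_le_one)
        (entropyMinorant_nonneg measureReal_nonneg measureReal_le_one)]
    exact ENNReal.ofReal_le_ofReal
      (mul_le_entropyMinorant_add measureReal_nonneg measureReal_nonneg hle)
  rw [lintegral_lintegral_sub_eq ν hg.continuous.measurable]
  refine (ENNReal.mul_le_mul_iff_right (a := ENNReal.ofReal (8 / 3)) (by simp)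
    ENNReal.ofReal_ne_top).1 (hprod.trans_eq ?_)
  rw [← mul_assoc, ← mul_assoc, ← ENNReal.ofReal_mul (by norm_num)]
  congr 1
  rw [← ENNReal.ofReal_ofNat 2, ← ENNReal.ofReal_mul (by norm_num)]
  congr 1
  ring

theorem lintegral_enorm_sub_integral_le {X : Type*} [MeasurableSpace X] (ν : Measure X)
    [IsProbabilityMeasure ν] {g : X → ℝ} (hg : Measurable g) (hgi : Integrable g ν) :
    ∫⁻ x, ‖g x - ∫ y, g y ∂ν‖ₑ ∂ν ≤ 2 * ∫⁻ x, ∫⁻ y, ENNReal.ofReal (g x - g y) ∂ν ∂ν := by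
  have hsplit : ∀ a : ℝ, ‖a‖ₑ = ENNReal.ofReal a + ENNReal.ofReal (-a) := by
    intro a
    rcases le_total 0 a with ha | ha
    · rw [ENNReal.ofReal_of_nonpos (neg_nonpos.2 ha), add_zero, Real.enorm_of_nonneg ha]
    · rw [ENNReal.ofReal_of_nonpos ha, zero_add, ← enorm_neg, Real.enorm_of_nonneg (neg_nonneg.2 ha)]
  have hint : ∀ k : X → ℝ, Integrable k ν → ENNReal.ofReal (∫ y, k y ∂ν) ≤
      ∫⁻ y, ENNReal.ofReal (k y) ∂ν := by
    intro k hk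
    rw [integral_eq_lintegral_pos_part_sub_lintegral_neg_part hk]
    refine (ENNReal.ofReal_le_ofReal (sub_le_self _ ENNReal.toReal_nonneg)).trans ?_
    exact ENNReal.ofReal_toReal_le
  have h1 : ∀ x, ENNReal.ofReal (g x - ∫ y, g y ∂ν) ≤ ∫⁻ y, ENNReal.ofReal (g x - g y) ∂ν := by
    intro x
    have := hint (fun y => g x - g y) ((integrable_const _).sub hgi)
    rwa [integral_sub (integrable_const _) hgi, integral_const, probReal_univ, one_smul] at this
  have h2 : ∀ x, ENNReal.ofReal (-(g x - ∫ y, g y ∂ν)) ≤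
      ∫⁻ y, ENNReal.ofReal (g y - g x) ∂ν := by
    intro x
    have := hint (fun y => g y - g x) (hgi.sub (integrable_const _))
    rwa [integral_sub hgi (integrable_const _), integral_const, probReal_univ, one_smul,
      ← neg_sub] at this
  simp only [hsplit]
  rw [lintegral_add_left (by fun_prop), two_mul]
  refine add_le_add (lintegral_mono h1) ((lintegral_mono h2).trans_eq ?_)
  exact lintegral_lintegral_swap (by fun_prop)

/-- **`L¹` Poincaré–Wirtinger inequality** on a bounded convex set, for `C¹` functions. -/
theorem setLIntegral_enorm_sub_mean_le (hm : MeasurableSet Ω) (hb : Bornology.IsBounded Ω)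
    (hc : Convex ℝ Ω) (h0 : volume Ω ≠ 0) {D : ℝ} (hD0 : 0 ≤ D)
    (hD : Metric.diam Ω ≤ D) {g : EuclideanSpace ℝ (Fin n) → ℝ} (hg : ContDiff ℝ 1 g) :
    ∫⁻ x in Ω, ‖g x - (volume Ω).toReal⁻¹ * ∫ y in Ω, g y‖ₑ
      ≤ ENNReal.ofReal (3 / 2 * D) * ∫⁻ x in Ω, ‖fderiv ℝ g x‖ₑ := by
  have hT : volume Ω ≠ ⊤ := hb.measure_lt_top.ne
  have h1 := lintegral_lintegral_sub_le hm hb hc h0 hD0 hD hg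
  have : IsProbabilityMeasure (ProbabilityTheory.cond volume Ω) :=
    ProbabilityTheory.cond_isProbabilityMeasure_of_finite h0 hT
  have hgi : IntegrableOn g Ω :=
    (hg.continuous.continuousOn.integrableOn_compact hb.isCompact_closure).mono_set subset_closure
  have h2 := lintegral_enorm_sub_integral_le (ProbabilityTheory.cond volume Ω)
    hg.continuous.measurable (hgi.smul_measure (ENNReal.inv_ne_top.2 h0))
  have h3 := h2.trans (mul_le_mul_right h1 2)
  simp only [ProbabilityTheory.cond, lintegral_smul_measure, integral_smul_measure, smul_eq_mul,
    ENNReal.toReal_inv] at h3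
  refine (ENNReal.mul_le_mul_iff_right (ENNReal.inv_ne_zero.2 hT) (ENNReal.inv_ne_top.2 h0)).1
    (h3.trans_eq ?_)
  rw [mul_left_comm (ENNReal.ofReal _), mul_left_comm 2]
  congr 1
  rw [← mul_assoc]
  congr 1
  rw [← ENNReal.ofReal_ofNat 2, ← ENNReal.ofReal_mul (by norm_num)]
  congr 1
  ring

end Cell

section Mollification

open scoped Convolution

variable {n : ℕ}

theorem fderiv_normed_convolution_eq (φ : ContDiffBump (0 : EuclideanSpace ℝ (Fin n)))
    {f : EuclideanSpace ℝ (Fin n) → ℝ} (hfd : Differentiable ℝ f) (hfi : Integrable f)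
    (hgi : Integrable (fderiv ℝ f)) (x : EuclideanSpace ℝ (Fin n)) :
    fderiv ℝ (φ.normed volume ⋆[ContinuousLinearMap.lsmul ℝ ℝ, volume] f) x =
      ∫ y, φ.normed volume y • fderiv ℝ f (x - y) := by
  have hψd : ContDiff ℝ 1 (φ.normed volume) := φ.contDiff_normed
  have hψc : HasCompactSupport (φ.normed volume) := φ.hasCompactSupport_normed
  have hψ' : Continuous (fderiv ℝ (φ.normed volume)) := hψd.continuous_fderiv one_ne_zero
  obtain ⟨M, hM⟩ := hψc.exists_bound_of_continuous hψd.continuous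
  obtain ⟨M', hM'⟩ := (hψc.fderiv ℝ).exists_bound_of_continuous hψ'
  have hfx : Integrable fun y => f (x - y) := hfi.comp_sub_left x
  have hgx : Integrable fun y => fderiv ℝ f (x - y) := hgi.comp_sub_left x
  have hsmul : Integrable fun y => φ.normed volume y • fderiv ℝ f (x - y) :=
    hgx.bdd_smul M hψd.continuous.aestronglyMeasurable (ae_of_all _ hM)
  have hG : ∀ y, HasFDerivAt (fun y => f (x - y)) (-fderiv ℝ f (x - y)) y := by
    intro y
    have h1 := (hfd (x - y)).hasFDerivAt.comp y ((hasFDerivAt_id y).const_sub x)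
    convert! h1 using 1
    ext v
    simp
  rw [(hψc.hasFDerivAt_convolution_left (ContinuousLinearMap.lsmul ℝ ℝ) hψd
    hfi.locallyIntegrable x).fderiv]
  have hconv : Integrable fun y =>
      ContinuousLinearMap.precompL (EuclideanSpace ℝ (Fin n)) (ContinuousLinearMap.lsmul ℝ ℝ)
        (fderiv ℝ (φ.normed volume) y) (f (x - y)) :=
    (hψc.fderiv ℝ).convolutionExists_left _ hψ' hfi.locallyIntegrable x
  ext v
  rw [ContinuousLinearMap.integral_apply hsmul, convolution_def,
    ContinuousLinearMap.integral_apply hconv]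
  have hψv : ∀ y, ‖fderiv ℝ (φ.normed volume) y v‖ ≤ M' * ‖v‖ := fun y =>
    (ContinuousLinearMap.le_opNorm _ _).trans (by gcongr; exact hM' y)
  have hgv : Integrable fun y => fderiv ℝ f (x - y) v :=
    (ContinuousLinearMap.apply ℝ ℝ v).integrable_comp hgx
  have parts := integral_bilinear_hasFDerivAt_right_eq_neg_left_of_integrable
    (μ := volume) (B := ContinuousLinearMap.mul ℝ ℝ)
    (f := φ.normed volume) (f' := fderiv ℝ (φ.normed volume))
    (g := fun y => f (x - y)) (g' := fun y => -fderiv ℝ f (x - y)) (v := v)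
    (hfx.bdd_mul (c := M' * ‖v‖) (by fun_prop) (ae_of_all _ hψv))
    (by
      simpa using (hgv.bdd_mul (c := M) hψd.continuous.aestronglyMeasurable (ae_of_all _ hM)))
    (hfx.bdd_mul (c := M) hψd.continuous.aestronglyMeasurable (ae_of_all _ hM))
    (fun y _ => ((hψd.differentiable one_ne_zero) y).hasFDerivAt) (fun y _ => hG y)
  simp only [neg_apply, map_neg, integral_neg, neg_inj,
    ContinuousLinearMap.mul_apply'] at parts
  simpa using parts.symm

theorem lintegral_enorm_fderiv_normed_convolution_le
    (φ : ContDiffBump (0 : EuclideanSpace ℝ (Fin n)))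
    {f : EuclideanSpace ℝ (Fin n) → ℝ} (hfd : Differentiable ℝ f) (hfi : Integrable f)
    (hgi : Integrable (fderiv ℝ f)) :
    ∫⁻ x, ‖fderiv ℝ (φ.normed volume ⋆[ContinuousLinearMap.lsmul ℝ ℝ, volume] f) x‖ₑ ≤
      ∫⁻ x, ‖fderiv ℝ f x‖ₑ := by
  have hψm : Measurable (φ.normed volume : EuclideanSpace ℝ (Fin n) → ℝ) :=
    φ.continuous_normed.measurable
  have hfm : Measurable (fderiv ℝ f) := measurable_fderiv ℝ f
  have hψ1 : ∫⁻ y, ‖φ.normed volume y‖ₑ = 1 := by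
    rw [← ofReal_integral_norm_eq_lintegral_enorm φ.integrable_normed]
    simp only [Real.norm_of_nonneg (φ.nonneg_normed _), φ.integral_normed, ENNReal.ofReal_one]
  calc _ ≤ ∫⁻ x, ∫⁻ y, ‖φ.normed volume y‖ₑ * ‖fderiv ℝ f (x - y)‖ₑ := by
        refine lintegral_mono fun x => ?_
        rw [fderiv_normed_convolution_eq φ hfd hfi hgi]
        refine (enorm_integral_le_lintegral_enorm _).trans_eq ?_
        simp only [enorm_smul]
    _ = ∫⁻ y, ∫⁻ x, ‖φ.normed volume y‖ₑ * ‖fderiv ℝ f (x - y)‖ₑ :=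
        lintegral_lintegral_swap (by fun_prop)
    _ = ∫⁻ y, ‖φ.normed volume y‖ₑ * ∫⁻ x, ‖fderiv ℝ f x‖ₑ := by
        refine lintegral_congr fun y => ?_
        rw [lintegral_const_mul _ (by fun_prop),
          lintegral_sub_right_eq_self (fun x => ‖fderiv ℝ f x‖ₑ) y]
    _ = _ := by rw [lintegral_mul_const _ (by fun_prop), hψ1, one_mul]

theorem tendsto_setIntegral_normed_convolution
    {φ : ℕ → ContDiffBump (0 : EuclideanSpace ℝ (Fin n))}
    (hφ : Tendsto (fun k => (φ k).rOut) atTop (𝓝 0)) (hφ1 : ∀ k, (φ k).rOut ≤ 1)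
    {f : EuclideanSpace ℝ (Fin n) → ℝ} (hf : Continuous f)
    {Ω : Set (EuclideanSpace ℝ (Fin n))} (hm : MeasurableSet Ω) (hb : Bornology.IsBounded Ω) :
    Tendsto (fun k => ∫ x in Ω,
        ((φ k).normed volume ⋆[ContinuousLinearMap.lsmul ℝ ℝ, volume] f) x)
      atTop (𝓝 (∫ x in Ω, f x)) := by
  have : IsFiniteMeasure (volume.restrict Ω) := ⟨by simpa using hb.measure_lt_top⟩
  obtain ⟨M, hM⟩ := (hb.cthickening (δ := 1)).isCompact_closure.exists_bound_of_continuousOn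
    hf.continuousOn
  have hM' : ∀ x ∈ Ω, ∀ y ∈ Metric.closedBall x 1, ‖f y‖ ≤ M := fun x hx y hy =>
    hM y (subset_closure (Metric.closedBall_subset_cthickening hx 1 hy))
  refine tendsto_integral_of_dominated_convergence (fun _ => 3 * M) (fun k => ?_)
    (integrable_const _) (fun k => ?_)
    (ae_of_all _ fun x => ContDiffBump.convolution_tendsto_right_of_continuous hφ hf x)
  · exact ((φ k).hasCompactSupport_normed.continuous_convolution_left _
      (φ k).continuous_normed hf.locallyIntegrable).aestronglyMeasurable
  · filter_upwards [ae_restrict_mem hm] with x hx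
    have hfx := hM' x hx x (by simp)
    have := (φ k).dist_normed_convolution_le (μ := volume) (x₀ := x) (ε := 2 * M)
      hf.aestronglyMeasurable (fun y hy => by
        have := hM' x hx y (Metric.mem_closedBall.2 ((Metric.mem_ball.1 hy).le.trans (hφ1 k)))
        linarith [dist_le_norm_add_norm (f y) (f x)])
    rw [dist_eq_norm] at this
    linarith [norm_le_norm_add_norm_sub'
      (((φ k).normed volume ⋆[ContinuousLinearMap.lsmul ℝ ℝ, volume] f) x) (f x)]

end Mollification

theorem tsum_liminf_le_liminf_tsum {ι : Type*} [Countable ι] (a : ℕ → ι → ℝ≥0∞) :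
    ∑' i, liminf (fun k => a k i) atTop ≤ liminf (fun k => ∑' i, a k i) atTop := by
  let _ : MeasurableSpace ι := ⊤
  simpa only [lintegral_count] using
    lintegral_liminf_le (μ := Measure.count) (f := a) fun _ => measurable_from_top

/-- Global `L¹` Poincaré inequality for cell averaging over a countable partition of `ℝⁿ`
into bounded convex measurable cells of diameter at most `D`: for `f ∈ W^{1,1}(ℝⁿ)`
(here: differentiable with `f` and `‖∇f‖` integrable), if `πf` equals the mean of `f` on
each cell, then `‖f − πf‖₁ ≤ (π/2) · D · ‖∇f‖₁`. -/
theorem stmt10 {n : ℕ} {ι : Type*} [Countable ι]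
    (C : ι → Set (EuclideanSpace ℝ (Fin n)))
    (hCm : ∀ i, MeasurableSet (C i))
    (hCb : ∀ i, Bornology.IsBounded (C i))
    (hCc : ∀ i, Convex ℝ (C i))
    (hCd : Pairwise (Function.onFun Disjoint C))
    (hCu : (⋃ i, C i) = Set.univ)
    (hC0 : ∀ i, 0 < volume (C i)) (hCt : ∀ i, volume (C i) < ⊤)
    (D : ℝ) (hdiam : ∀ i, Metric.diam (C i) ≤ D)
    (f : EuclideanSpace ℝ (Fin n) → ℝ)
    (hfd : Differentiable ℝ f)
    (hfi : Integrable f)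
    (hgi : Integrable (fun x => ‖fderiv ℝ f x‖))
    (πf : EuclideanSpace ℝ (Fin n) → ℝ)
    (hπ : ∀ i, ∀ x ∈ C i, πf x = (volume (C i)).toReal⁻¹ * ∫ y in C i, f y) :
    ∫ x, |f x - πf x| ≤ (Real.pi / 2) * D * ∫ x, ‖fderiv ℝ f x‖ := by
  have hD0 : 0 ≤ D := by
    obtain ⟨i, _⟩ := Set.mem_iUnion.1 (hCu ▸ Set.mem_univ (0 : EuclideanSpace ℝ (Fin n)))
    exact Metric.diam_nonneg.trans (hdiam i)
  have hgi' : Integrable (fderiv ℝ f) :=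
    (integrable_norm_iff (measurable_fderiv ℝ f).aestronglyMeasurable).1 hgi
  have hsum : ∀ k : EuclideanSpace ℝ (Fin n) → ℝ≥0∞, ∫⁻ x, k x = ∑' i, ∫⁻ x in C i, k x :=
    fun k => by rw [← setLIntegral_univ, ← hCu, lintegral_iUnion hCm hCd]
  let φ : ℕ → ContDiffBump (0 : EuclideanSpace ℝ (Fin n)) := fun k =>
    ⟨1 / (k + 1) / 2, 1 / (k + 1), by positivity, half_lt_self (by positivity)⟩
  have hφ : Tendsto (fun k => (φ k).rOut) atTop (𝓝 0) := tendsto_one_div_add_atTop_nhds_zero_nat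
  have hφ1 : ∀ k, (φ k).rOut ≤ 1 := fun k => (div_le_one (by positivity)).2 (by simp)
  let g : ℕ → EuclideanSpace ℝ (Fin n) → ℝ := fun k =>
    convolution ((φ k).normed volume) f (ContinuousLinearMap.lsmul ℝ ℝ) volume
  have hg : ∀ k, ContDiff ℝ 1 (g k) := fun k =>
    (φ k).hasCompactSupport_normed.contDiff_convolution_left _ (φ k).contDiff_normed
      hfi.locallyIntegrable
  let c := ENNReal.ofReal (3 / 2 * D)
  have hcell : ∀ i, ∫⁻ x in C i, ‖f x - πf x‖ₑ ≤
      liminf (fun k => c * ∫⁻ x in C i, ‖fderiv ℝ (g k) x‖ₑ) atTop := by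
    intro i
    let m : ℕ → ℝ := fun k => (volume (C i)).toReal⁻¹ * ∫ y in C i, g k y
    have hm : Tendsto m atTop (𝓝 ((volume (C i)).toReal⁻¹ * ∫ y in C i, f y)) :=
      (tendsto_setIntegral_normed_convolution hφ hφ1 hfd.continuous (hCm i) (hCb i)).const_mul _
    calc ∫⁻ x in C i, ‖f x - πf x‖ₑ
        = ∫⁻ x in C i, liminf (fun k => ‖g k x - m k‖ₑ) atTop := by
          refine setLIntegral_congr_fun (hCm i) fun x hx => ?_
          simp only [hπ i x hx]
          exact ((ContDiffBump.convolution_tendsto_right_of_continuous hφ hfd.continuous x).sub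
            hm).enorm.liminf_eq.symm
      _ ≤ liminf (fun k => ∫⁻ x in C i, ‖g k x - m k‖ₑ) atTop := by
          refine lintegral_liminf_le fun k => ?_
          have := (hg k).continuous
          fun_prop
      _ ≤ _ := liminf_le_liminf (Eventually.of_forall fun k =>
          setLIntegral_enorm_sub_mean_le (hCm i) (hCb i) (hCc i) (hC0 i).ne' hD0 (hdiam i) (hg k))
  have hmain : ∫⁻ x, ‖f x - πf x‖ₑ ≤ c * ∫⁻ x, ‖fderiv ℝ f x‖ₑ := by
    calc ∫⁻ x, ‖f x - πf x‖ₑ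
        = ∑' i, ∫⁻ x in C i, ‖f x - πf x‖ₑ := hsum _
      _ ≤ ∑' i, liminf (fun k => c * ∫⁻ x in C i, ‖fderiv ℝ (g k) x‖ₑ) atTop :=
          ENNReal.tsum_le_tsum hcell
      _ ≤ liminf (fun k => ∑' i, c * ∫⁻ x in C i, ‖fderiv ℝ (g k) x‖ₑ) atTop :=
          tsum_liminf_le_liminf_tsum _
      _ ≤ liminf (fun _ : ℕ => c * ∫⁻ x, ‖fderiv ℝ f x‖ₑ) atTop := by
          refine liminf_le_liminf (Eventually.of_forall fun k => ?_)
          rw [ENNReal.tsum_mul_left, ← hsum]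
          exact mul_le_mul' le_rfl
            (lintegral_enorm_fderiv_normed_convolution_le (φ k) hfd hfi hgi')
      _ = _ := liminf_const _
  have hR0 : 0 ≤ ∫ x, ‖fderiv ℝ f x‖ := integral_nonneg fun _ => norm_nonneg _
  have hpi : 3 / 2 * D * ∫ x, ‖fderiv ℝ f x‖ ≤ (Real.pi / 2) * D * ∫ x, ‖fderiv ℝ f x‖ := by
    gcongr
    exact Real.pi_gt_three.le
  refine le_trans ?_ hpi
  by_cases hint : Integrable fun x => |f x - πf x|
  swap
  · rw [integral_undef hint]
    positivity
  rw [← ofReal_integral_norm_eq_lintegral_enorm hgi', ← ENNReal.ofReal_mul (by positivity)] at hmain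
  refine (ENNReal.ofReal_le_ofReal_iff (by positivity)).1 (le_trans ?_ hmain)
  simp only [← Real.norm_eq_abs, ← ofReal_norm]
  rw [integral_eq_lintegral_of_nonneg_ae]
  · exact ENNReal.ofReal_toReal_le
  · exact ae_of_all _ fun _ => norm_nonneg _
  · exact hint.aestronglyMeasurable
end

section
/- Let ρ : ℝ³ → [0,∞) with ∫ρ = N, √ρ ∈ H¹(ℝ³), and suppose F[ρ] ≥ c |√ρ|²_{H¹} = c ∫|∇√ρ|² for some c > 0. Let π_n be cell-averaging over a partition into convex cells of diameter ≤ D_n. Then ‖ρ − π_n ρ‖₁ ≤ (π/2) D_n · 2√N · (F[ρ]/c)^{1/2}; i.e. ‖ρ − π_n ρ‖₁ ≤ C D_n F[ρ]^{1/2} with C depending only on N and c. -/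
open Filter Topology MeasureTheory
open Set Metric
open scoped ENNReal

/-- Polar coordinates for the Lebesgue integral of a nonnegative function. -/
lemma lintegral_eq_lintegral_sphere {E : Type*} [NormedAddCommGroup E] [NormedSpace ℝ E]
    [FiniteDimensional ℝ E] [Nontrivial E] [MeasurableSpace E] [BorelSpace E]
    (μ : Measure E) [μ.IsAddHaarMeasure] {f : E → ℝ≥0∞} (hf : Measurable f) :
    ∫⁻ x, f x ∂μ = ∫⁻ θ : sphere (0 : E) 1, (∫⁻ r in Ioi (0 : ℝ),
      ENNReal.ofReal (r ^ (Module.finrank ℝ E - 1)) * f (r • (θ : E))) ∂μ.toSphere := by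
  have hmp := (μ.measurePreserving_homeomorphUnitSphereProd).symm
    (homeomorphUnitSphereProd E).toMeasurableEquiv
  have hg : Measurable fun q : sphere (0 : E) 1 × Ioi (0 : ℝ) =>
      f ((q.2 : ℝ) • (q.1 : E)) := by fun_prop
  calc ∫⁻ x, f x ∂μ = ∫⁻ x in ({0}ᶜ : Set E), f x ∂μ := by
        rw [restrict_compl_singleton]
    _ = ∫⁻ x : ({0}ᶜ : Set E), f x ∂(μ.comap (↑)) :=
        (lintegral_subtype_comap (measurableSet_singleton _).compl f).symm
    _ = ∫⁻ q, f ((q.2 : ℝ) • (q.1 : E))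
          ∂(μ.toSphere.prod (Measure.volumeIoiPow (Module.finrank ℝ E - 1))) := by
        rw [← hmp.lintegral_comp_emb (MeasurableEquiv.measurableEmbedding _)]
        rfl
    _ = _ := by
        rw [lintegral_prod _ hg.aemeasurable]
        refine lintegral_congr fun θ => ?_
        rw [Measure.volumeIoiPow, lintegral_withDensity_eq_lintegral_mul _ (by fun_prop)
          (by fun_prop)]
        exact lintegral_subtype_comap measurableSet_Ioi
          fun r : ℝ => ENNReal.ofReal (r ^ (Module.finrank ℝ E - 1)) * f (r • (θ : E))

lemma integral_min_sub_mul_sq_le {a R : ℝ} (ha : 0 ≤ a) (haR : a ≤ R) :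
    ∫ r in a..R, min (r - a) a * r ^ 2 ≤ 0.3364 * R * ((R ^ 3 - a ^ 3) / 3) := by
  have hlin : ∀ b, ∫ r in a..b, (r - a) * r ^ 2 = b ^ 4 / 4 - a * b ^ 3 / 3 + a ^ 4 / 12 := by
    intro b
    have : ∀ r : ℝ, (r - a) * r ^ 2 = r ^ 3 - a * r ^ 2 := fun r => by ring
    simp_rw [this]
    rw [intervalIntegral.integral_sub (Continuous.intervalIntegrable (by fun_prop) _ _)
      (Continuous.intervalIntegrable (by fun_prop) _ _)]
    simp [integral_pow]
    ring
  have hint : ∀ b d, IntervalIntegrable (fun r => min (r - a) a * r ^ 2) volume b d :=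
    fun b d => Continuous.intervalIntegrable (by fun_prop) _ _
  have hmono : ∀ b, a ≤ b → ∫ r in a..b, min (r - a) a * r ^ 2 ≤ ∫ r in a..b, (r - a) * r ^ 2 :=
    fun b hb => intervalIntegral.integral_mono_on hb (hint _ _)
      (Continuous.intervalIntegrable (by fun_prop) _ _)
      fun r _ => mul_le_mul_of_nonneg_right (min_le_left _ _) (sq_nonneg r)
  rcases le_total (2 * a) R with h | h
  · have hconst : ∫ r in (2 * a)..R, min (r - a) a * r ^ 2 ≤ ∫ r in (2 * a)..R, a * r ^ 2 :=
      intervalIntegral.integral_mono_on h (hint _ _)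
        (Continuous.intervalIntegrable (by fun_prop) _ _)
        fun r _ => mul_le_mul_of_nonneg_right (min_le_right _ _) (sq_nonneg r)
    rw [← intervalIntegral.integral_add_adjacent_intervals (hint a (2 * a)) (hint (2 * a) R)]
    have h1 := hmono (2 * a) (by linarith)
    rw [hlin] at h1
    simp only [intervalIntegral.integral_const_mul, integral_pow] at hconst
    norm_num at hconst
    have key : a * R ^ 3 / 3 - 15 * a ^ 4 / 12 ≤ 0.3364 * R * ((R ^ 3 - a ^ 3) / 3) := by
      nlinarith [sq_nonneg (R * (R - 2.33 * a)), sq_nonneg (a * (R - 2.33 * a)),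
        mul_nonneg (mul_nonneg ha (ha.trans haR)) (sq_nonneg (R - 2.33 * a)),
        sq_nonneg (a ^ 2), mul_nonneg (pow_nonneg ha 3) (sub_nonneg.2 h)]
    nlinarith
  · refine (hmono R haR).trans ?_
    rw [hlin]
    obtain ⟨d, rfl⟩ : ∃ d, R = a + d := ⟨R - a, by ring⟩
    have hd : 0 ≤ d := by linarith
    obtain ⟨f, rfl⟩ : ∃ f, a = d + f := ⟨a - d, by ring⟩
    have hf : 0 ≤ f := by linarith
    rw [← sub_nonneg]
    ring_nf
    positivity

/-- Along a ray `r ↦ r • θ` with `κ = ⟪e, θ⟫`, the mean of `min (κ r - a) a` with respect to `r² dr`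
over the part of the ray inside a star-shaped set of height at most `D`. -/
lemma lintegral_ray_min_le {W : Set ℝ} (hWm : MeasurableSet W) {κ a D : ℝ} (ha : 0 ≤ a)
    (hW0 : ∀ r ∈ W, 0 < r) (hWa : ∀ r ∈ W, a < κ * r) (hWD : ∀ r ∈ W, κ * r ≤ D)
    (hW : ∀ r ∈ W, ∀ s, 0 < s → s ≤ r → a < κ * s → s ∈ W) :
    ∫⁻ r in W, ENNReal.ofReal (r ^ 2) * ENNReal.ofReal (min (κ * r - a) a) ≤
      ENNReal.ofReal (0.3364 * D) * ∫⁻ r in W, ENNReal.ofReal (r ^ 2) := by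
  rcases W.eq_empty_or_nonempty with rfl | ⟨r₀, hr₀⟩
  · simp
  have hκ : 0 < κ := by
    by_contra! h
    nlinarith [hWa r₀ hr₀, hW0 r₀ hr₀]
  obtain ⟨α, rfl⟩ : ∃ α, a = κ * α := ⟨a / κ, by field_simp⟩
  have hα : 0 ≤ α := nonneg_of_mul_nonneg_right ha hκ
  have hWα : ∀ r ∈ W, α < r := fun r hr => lt_of_mul_lt_mul_left (hWa r hr) hκ.le
  have hbdd : BddAbove W := ⟨D / κ, fun r hr => by
    rw [le_div_iff₀ hκ]; linarith [hWD r hr]⟩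
  have hne : W.Nonempty := ⟨r₀, hr₀⟩
  set R := sSup W with hR
  have hαR : α ≤ R := (hWα r₀ hr₀).le.trans (le_csSup hbdd hr₀)
  have hRD : κ * R ≤ D := by
    rw [← le_div_iff₀' hκ]
    exact csSup_le hne fun r hr => by rw [le_div_iff₀' hκ]; exact hWD r hr
  have hWsub : W ⊆ Ioc α R := fun r hr => ⟨hWα r hr, le_csSup hbdd hr⟩
  have hsubW : Ioo α R ⊆ W := by
    intro s hs
    obtain ⟨r, hr, hsr⟩ := exists_lt_of_lt_csSup hne hs.2
    exact hW r hr s (hα.trans_lt hs.1) hsr.le (mul_lt_mul_of_pos_left hs.1 hκ)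
  have hWae : W =ᵐ[volume] Ioc α R := by
    refine (hWsub.eventuallyLE).antisymm ?_
    exact Ioo_ae_eq_Ioc.symm.le.trans hsubW.eventuallyLE
  have hcalc : ∀ g : ℝ → ℝ, Continuous g → (∀ r, α < r → 0 ≤ g r) →
      ∫⁻ r in W, ENNReal.ofReal (g r) = ENNReal.ofReal (∫ r in α..R, g r) := by
    intro g hg hg0
    rw [setLIntegral_congr hWae, intervalIntegral.integral_of_le hαR,
      ofReal_integral_eq_lintegral_ofReal (hg.integrableOn_Ioc)]
    filter_upwards [ae_restrict_mem measurableSet_Ioc] with r hr using hg0 r hr.1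
  have hmin : ∀ r, ENNReal.ofReal (r ^ 2) * ENNReal.ofReal (min (κ * r - κ * α) (κ * α)) =
      ENNReal.ofReal (κ * (min (r - α) α * r ^ 2)) := by
    intro r
    rw [← ENNReal.ofReal_mul (sq_nonneg r), ← mul_sub, ← mul_min_of_nonneg _ _ hκ.le]
    ring_nf
  simp_rw [hmin]
  rw [hcalc _ (by fun_prop) fun r hr =>
      mul_nonneg hκ.le (mul_nonneg (le_min (by linarith) hα) (sq_nonneg r)),
    hcalc _ (by fun_prop) fun r _ => sq_nonneg r, intervalIntegral.integral_const_mul,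
    integral_pow, ← ENNReal.ofReal_mul (by nlinarith [mul_nonneg hκ.le (hα.trans hαR)])]
  refine ENNReal.ofReal_le_ofReal ?_
  have h3 : 0 ≤ (R ^ 3 - α ^ 3) / 3 := by
    have := pow_le_pow_left₀ hα hαR 3
    linarith
  calc κ * ∫ r in α..R, min (r - α) α * r ^ 2
      ≤ κ * (0.3364 * R * ((R ^ 3 - α ^ 3) / 3)) :=
        mul_le_mul_of_nonneg_left (integral_min_sub_mul_sq_le hα hαR) hκ.le
    _ = 0.3364 * (κ * R) * ((R ^ 3 - α ^ 3) / 3) := by ring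
    _ ≤ 0.3364 * D * ((R ^ 3 - α ^ 3) / 3) := by gcongr
    _ = _ := by norm_num

local notation "ℝ³" => EuclideanSpace ℝ (Fin 3)

lemma StarConvex.lintegral_min_inner_le {S : Set ℝ³} (hS : StarConvex ℝ 0 S)
    (hSm : MeasurableSet S) (e : ℝ³) {a D : ℝ} (ha : 0 ≤ a) (hD : ∀ y ∈ S, inner ℝ e y ≤ D) :
    ∫⁻ y in S ∩ {y | a < inner ℝ e y}, ENNReal.ofReal (min (inner ℝ e y - a) a) ≤
      ENNReal.ofReal (0.3364 * D) * volume (S ∩ {y | a < inner ℝ e y}) := by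
  set S' := S ∩ {y : ℝ³ | a < inner ℝ e y} with hS'
  have hS'm : MeasurableSet S' := hSm.inter (measurableSet_lt (by fun_prop) (by fun_prop))
  have hray : ∀ (f : ℝ³ → ℝ≥0∞), Measurable f → ∫⁻ y in S', f y =
      ∫⁻ θ : sphere (0 : ℝ³) 1, (∫⁻ r in Ioi 0 ∩ (fun r : ℝ => r • (θ : ℝ³)) ⁻¹' S',
        ENNReal.ofReal (r ^ 2) * f (r • (θ : ℝ³))) ∂(volume : Measure ℝ³).toSphere := by
    intro f hf
    rw [← lintegral_indicator hS'm, lintegral_eq_lintegral_sphere _ (hf.indicator hS'm)]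
    refine lintegral_congr fun θ => ?_
    have hm : MeasurableSet ((fun r : ℝ => r • (θ : ℝ³)) ⁻¹' S') :=
      hS'm.preimage (by fun_prop)
    rw [inter_comm, ← setLIntegral_indicator hm]
    refine lintegral_congr fun r => ?_
    by_cases h : r • (θ : ℝ³) ∈ S'
    · have h' : r ∈ (fun r : ℝ => r • (θ : ℝ³)) ⁻¹' S' := h
      simp [indicator_of_mem h, indicator_of_mem h']
    · have h' : r ∉ (fun r : ℝ => r • (θ : ℝ³)) ⁻¹' S' := h
      simp [indicator_of_notMem h, indicator_of_notMem h']
  rw [← setLIntegral_one, hray _ (by fun_prop), hray _ (by fun_prop),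
    ← lintegral_const_mul' _ _ ENNReal.ofReal_ne_top]
  refine lintegral_mono fun θ => ?_
  simp only [mul_one, inner_smul_right, mul_comm _ (inner ℝ e (θ : ℝ³))]
  refine lintegral_ray_min_le (measurableSet_Ioi.inter (hS'm.preimage (by fun_prop))) ha
    (fun r hr => hr.1) (fun r hr => ?_) (fun r hr => ?_) fun r hr s hs hsr has => ?_
  · have := hr.2.2
    simpa [inner_smul_right, mul_comm] using this
  · have := hD _ hr.2.1
    simpa [inner_smul_right, mul_comm] using this
  · refine ⟨hs, ?_, ?_⟩
    · have hr0 : 0 < r := hr.1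
      have := hS.smul_mem hr.2.1 (t := s / r) (by positivity) ((div_le_one hr0).2 hsr)
      simpa [smul_smul, div_mul_cancel₀ _ hr0.ne'] using this
    · simpa [inner_smul_right, mul_comm] using has

lemma Convex.lintegral_min_inner_le {K : Set ℝ³} (hK : Convex ℝ K) (hKm : MeasurableSet K)
    (e : ℝ³) {p z : ℝ³} (hp : p ∈ K) {D : ℝ} (hpz : 0 ≤ inner ℝ e (z - p))
    (hD : ∀ y ∈ K, inner ℝ e (y - p) ≤ D) :
    ∫⁻ y in K ∩ {y | 0 < inner ℝ e (y - z)},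
        ENNReal.ofReal (min (inner ℝ e (y - z)) (inner ℝ e (z - p))) ≤
      ENNReal.ofReal (0.3364 * D) * volume (K ∩ {y | 0 < inner ℝ e (y - z)}) := by
  have hmp : MeasurePreserving (fun y : ℝ³ => y + p) := measurePreserving_add_right volume p
  have hemb : MeasurableEmbedding (fun y : ℝ³ => y + p) := measurableEmbedding_addRight p
  have hset : (fun y : ℝ³ => y + p) ⁻¹' (K ∩ {y | 0 < inner ℝ e (y - z)}) =
      (fun y => y + p) ⁻¹' K ∩ {y | inner ℝ e (z - p) < inner ℝ e y} := by
    ext y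
    simp only [mem_preimage, mem_inter_iff, mem_ofPred_eq, inner_sub_right, inner_add_right]
    constructor <;> rintro ⟨h1, h2⟩ <;> exact ⟨h1, by linarith⟩
  have hstar : StarConvex ℝ 0 ((fun y : ℝ³ => y + p) ⁻¹' K) :=
    (hK.translate_preimage_left p).starConvex (by simpa using hp)
  have := hstar.lintegral_min_inner_le (hKm.preimage (by fun_prop)) e hpz (D := D)
    fun y hy => by simpa using hD _ hy
  rw [← hset, hmp.measure_preimage_emb hemb] at this
  rw [← hmp.setLIntegral_comp_preimage_emb hemb]
  have hsub : ∀ y : ℝ³, inner ℝ e (y + p - z) = inner ℝ e y - inner ℝ e (z - p) := fun y => by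
    rw [← inner_sub_right]
    congr 1
    abel
  simpa only [hsub] using this

lemma lintegral_one_sub_pow_le {u a : ℝ} (hu : 0 < u) (ha : 0 ≤ a) :
    ∫⁻ t in Ioo (0 : ℝ) (1 / 2) ∩ {t | t * u ≤ (1 - t) * a},
      ENNReal.ofReal (((1 - t) ^ 4)⁻¹ * u) ≤ ENNReal.ofReal (7 / 3 * min u a) := by
  set b := min (1 / 2) (a / (u + a)) with hb
  have hb0 : 0 ≤ b := le_min (by norm_num) (by positivity)
  have hb2 : b ≤ 1 / 2 := min_le_left _ _
  have hsub : Ioo (0 : ℝ) (1 / 2) ∩ {t | t * u ≤ (1 - t) * a} ⊆ Ioc 0 b := by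
    rintro t ⟨ht, hta⟩
    refine ⟨ht.1, le_min ht.2.le ?_⟩
    rw [le_div_iff₀ (by positivity)]
    simp only [mem_ofPred_eq] at hta
    linarith
  have hderiv : ∀ t ∈ uIcc 0 b, HasDerivAt (fun t : ℝ => ((1 - t) ^ 3)⁻¹ / 3 * u)
      (((1 - t) ^ 4)⁻¹ * u) t := by
    intro t ht
    rw [uIcc_of_le hb0] at ht
    have h1 : (1 - t) ≠ 0 := by linarith [ht.2]
    have h := ((((hasDerivAt_id t).const_sub 1).pow 3).inv (pow_ne_zero 3 h1)).div_const 3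
      |>.mul_const u
    refine h.congr_deriv ?_
    simp only [id, Pi.pow_apply]
    field_simp
    norm_num
    ring
  have hcont : ContinuousOn (fun t : ℝ => ((1 - t) ^ 4)⁻¹ * u) (uIcc 0 b) := by
    refine ContinuousOn.mul (ContinuousOn.inv₀ (by fun_prop) fun t ht => ?_) continuousOn_const
    rw [uIcc_of_le hb0] at ht
    exact pow_ne_zero _ (by linarith [ht.2])
  have hval := intervalIntegral.integral_eq_sub_of_hasDerivAt hderiv hcont.intervalIntegrable
  have hnn : 0 ≤ᵐ[volume.restrict (Ioc 0 b)] fun t : ℝ => ((1 - t) ^ 4)⁻¹ * u :=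
    ae_of_all _ fun t => by positivity
  refine (lintegral_mono_set hsub).trans ?_
  rw [← ofReal_integral_eq_lintegral_ofReal
    ((intervalIntegrable_iff_integrableOn_Ioc_of_le hb0).1 hcont.intervalIntegrable) hnn,
    ← intervalIntegral.integral_of_le hb0, hval]
  refine ENNReal.ofReal_le_ofReal ?_
  rcases le_total u a with h | h
  · rw [min_eq_left h]
    have : ((1 - b) ^ 3)⁻¹ ≤ 8 := by
      have hpos : 0 < 1 - b := by linarith
      rw [inv_le_comm₀ (by positivity) (by norm_num)]
      calc (8 : ℝ)⁻¹ = (1 / 2) ^ 3 := by norm_num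
        _ ≤ (1 - b) ^ 3 := by gcongr; linarith
    norm_num
    nlinarith
  · rw [min_eq_right h]
    have hbe : b ≤ a / (u + a) := min_le_right _ _
    have h1b : u / (u + a) ≤ 1 - b := by
      have : u / (u + a) = 1 - a / (u + a) := by field_simp; ring
      linarith
    have : ((1 - b) ^ 3)⁻¹ ≤ ((u / (u + a)) ^ 3)⁻¹ := by gcongr
    have hq : ((u / (u + a)) ^ 3)⁻¹ / 3 * u - u / 3 ≤ 7 / 3 * a := by
      have : ((u / (u + a)) ^ 3)⁻¹ / 3 * u - u / 3 =
          (3 * u ^ 2 + 3 * u * a + a ^ 2) / u ^ 2 * a / 3 := by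
        field_simp
        ring
      rw [this]
      have : (3 * u ^ 2 + 3 * u * a + a ^ 2) / u ^ 2 ≤ 7 := by
        rw [div_le_iff₀ (by positivity)]
        nlinarith
      nlinarith
    norm_num
    nlinarith

/-- If `z` divides the segment from `x` to `y` in the ratio `t : 1 - t`, then
`x = (1 - t)⁻¹ • (z - t • y)`; the kernel integrates over all such segments contained in `K` whose
far end `y` lies on the positive side of `z` in the direction `g`. -/
lemma Convex.lintegral_kernel_half_le {K : Set ℝ³} (hK : Convex ℝ K) (hKc : IsCompact K)
    {z : ℝ³} (hz : z ∈ K) (g : ℝ³) :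
    ∫⁻ y in K ∩ {y | 0 < inner ℝ g (y - z)},
        (∫⁻ t in Ioo (0 : ℝ) (1 / 2) ∩ {t | (1 - t)⁻¹ • (z - t • y) ∈ K},
          ENNReal.ofReal (((1 - t) ^ 4)⁻¹ * |inner ℝ g (y - z)|)) ≤
      ENNReal.ofReal (7 / 3 * (0.3364 * (diam K * ‖g‖))) *
        volume (K ∩ {y | 0 < inner ℝ g (y - z)}) := by
  obtain ⟨p, hp, hmin⟩ := hKc.exists_isMinOn ⟨z, hz⟩
    (f := fun y => inner ℝ g y) (by fun_prop)
  have hmin' : ∀ y ∈ K, 0 ≤ inner ℝ g (y - p) := fun y hy => by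
    rw [inner_sub_right]
    linarith [isMinOn_iff.1 hmin y hy]
  have hD : ∀ y ∈ K, inner ℝ g (y - p) ≤ diam K * ‖g‖ := fun y hy => by
    refine (real_inner_le_norm _ _).trans ?_
    rw [mul_comm, ← dist_eq_norm]
    exact mul_le_mul_of_nonneg_right (dist_le_diam_of_mem hKc.isBounded hy hp) (norm_nonneg g)
  have hm : MeasurableSet (K ∩ {y | 0 < inner ℝ g (y - z)}) :=
    hKc.measurableSet.inter (measurableSet_lt (by fun_prop) (by fun_prop))
  calc _ ≤ ∫⁻ y in K ∩ {y | 0 < inner ℝ g (y - z)}, ENNReal.ofReal (7 / 3) *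
        ENNReal.ofReal (min (inner ℝ g (y - z)) (inner ℝ g (z - p))) := by
        refine setLIntegral_mono' hm fun y hy => ?_
        have hu : 0 < inner ℝ g (y - z) := hy.2
        rw [← ENNReal.ofReal_mul (by norm_num), abs_of_pos hu]
        refine le_trans (lintegral_mono_set ?_) (lintegral_one_sub_pow_le hu (hmin' z hz))
        rintro t ⟨ht, htK⟩
        refine ⟨ht, ?_⟩
        have h1 : 0 < 1 - t := by linarith [ht.2]
        have h2 := mul_nonneg h1.le (hmin' _ htK)
        simp only [inner_sub_right, inner_smul_right, mul_sub, mul_inv_cancel_left₀ h1.ne'] at h2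
        simp only [mem_ofPred_eq, inner_sub_right]
        linarith
    _ ≤ ENNReal.ofReal (7 / 3) * (ENNReal.ofReal (0.3364 * (diam K * ‖g‖)) *
          volume (K ∩ {y | 0 < inner ℝ g (y - z)})) := by
        rw [lintegral_const_mul' _ _ ENNReal.ofReal_ne_top]
        gcongr
        exact hK.lintegral_min_inner_le hKc.measurableSet g hp (hmin' z hz) hD
    _ = _ := by rw [← mul_assoc, ← ENNReal.ofReal_mul (by norm_num)]

lemma Convex.lintegral_kernel_le {K : Set ℝ³} (hK : Convex ℝ K) (hKc : IsCompact K)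
    {z : ℝ³} (hz : z ∈ K) (g : ℝ³) :
    ∫⁻ y in K, (∫⁻ t in Ioo (0 : ℝ) (1 / 2) ∩ {t | (1 - t)⁻¹ • (z - t • y) ∈ K},
          ENNReal.ofReal (((1 - t) ^ 4)⁻¹ * |inner ℝ g (y - z)|)) ≤
      ENNReal.ofReal (7 / 3 * (0.3364 * (diam K * ‖g‖))) * volume K := by
  set F : ℝ³ → ℝ≥0∞ := fun y => ∫⁻ t in Ioo (0 : ℝ) (1 / 2) ∩ {t | (1 - t)⁻¹ • (z - t • y) ∈ K},
          ENNReal.ofReal (((1 - t) ^ 4)⁻¹ * |inner ℝ g (y - z)|) with hF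
  set A := {y : ℝ³ | 0 < inner ℝ g (y - z)} with hA
  set B := {y : ℝ³ | 0 < inner ℝ (-g) (y - z)} with hB
  have hAm : MeasurableSet A := measurableSet_lt (by fun_prop) (by fun_prop)
  have hBm : MeasurableSet B := measurableSet_lt (by fun_prop) (by fun_prop)
  have hF0 : ∀ y ∉ A ∪ B, F y = 0 := by
    intro y hy
    simp only [hA, hB, mem_union, mem_ofPred_eq, inner_neg_left, not_or, not_lt] at hy
    have : inner ℝ g (y - z) = 0 := le_antisymm hy.1 (by linarith [hy.2])
    simp [hF, this]
  have hdisj : Disjoint (K ∩ A) (K ∩ B) := by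
    refine disjoint_left.2 fun y hyA hyB => ?_
    have h1 : 0 < inner ℝ g (y - z) := hyA.2
    have h2 : 0 < inner ℝ (-g) (y - z) := hyB.2
    rw [inner_neg_left] at h2
    linarith
  have hBF := hK.lintegral_kernel_half_le hKc hz (-g)
  simp only [inner_neg_left, abs_neg, norm_neg] at hBF
  calc ∫⁻ y in K, F y = ∫⁻ y in K, (A ∪ B).indicator F y := by
        refine lintegral_congr fun y => ?_
        by_cases h : y ∈ A ∪ B
        · rw [indicator_of_mem h]
        · rw [indicator_of_notMem h, hF0 y h]
    _ = ∫⁻ y in (K ∩ A) ∪ (K ∩ B), F y := by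
        rw [setLIntegral_indicator (hAm.union hBm), inter_comm, inter_union_distrib_left]
    _ ≤ (∫⁻ y in K ∩ A, F y) + ∫⁻ y in K ∩ B, F y := lintegral_union_le _ _ _
    _ ≤ ENNReal.ofReal (7 / 3 * (0.3364 * (diam K * ‖g‖))) * volume (K ∩ A) +
        ENNReal.ofReal (7 / 3 * (0.3364 * (diam K * ‖g‖))) * volume (K ∩ B) := by
        gcongr
        · exact hK.lintegral_kernel_half_le hKc hz g
        · simpa only [hB, inner_neg_left] using hBF
    _ ≤ _ := by
        rw [← mul_add, ← measure_union hdisj (hKc.measurableSet.inter hBm)]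
        gcongr
        exact union_subset inter_subset_left inter_subset_left

lemma enorm_sub_midpoint_le_lintegral {f : ℝ³ → ℝ} (hf : Differentiable ℝ f) (x y : ℝ³) :
    ‖f x - f ((2⁻¹ : ℝ) • (x + y))‖ₑ ≤ ∫⁻ t in Ioo (0 : ℝ) (1 / 2),
      ‖inner ℝ (gradient f ((1 - t) • x + t • y)) (y - x)‖ₑ := by
  set h : ℝ → ℝ := fun t => inner ℝ (gradient f ((1 - t) • x + t • y)) (y - x) with hh
  by_cases hfin : ∫⁻ t in Ioo (0 : ℝ) (1 / 2), ‖h t‖ₑ = ⊤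
  · rw [hfin]
    exact le_top
  have hderiv : ∀ t : ℝ, HasDerivAt (fun t : ℝ => f ((1 - t) • x + t • y)) (h t) t := by
    intro t
    have hline : HasDerivAt (fun t : ℝ => (1 - t) • x + t • y) (y - x) t := by
      have := (((hasDerivAt_id t).const_sub 1).smul_const x).add
        ((hasDerivAt_id t).smul_const y)
      refine this.congr_deriv ?_
      simp [sub_eq_neg_add]
    have := (hf ((1 - t) • x + t • y)).hasGradientAt.hasFDerivAt.comp_hasDerivAt t hline
    exact this.congr_deriv (by simp [hh])
  have hmeas : Measurable h := by
    have : h = deriv (fun t : ℝ => f ((1 - t) • x + t • y)) :=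
      funext fun t => (hderiv t).deriv.symm
    rw [this]
    exact measurable_deriv _
  have hint : IntervalIntegrable h volume 0 (1 / 2) := by
    rw [intervalIntegrable_iff_integrableOn_Ioo_of_le (by norm_num)]
    exact ⟨hmeas.aestronglyMeasurable, lt_top_iff_ne_top.2 hfin⟩
  have hftc := intervalIntegral.integral_eq_sub_of_hasDerivAt (fun t _ => hderiv t) hint
  have hmid : (1 - (1 / 2 : ℝ)) • x + (1 / 2 : ℝ) • y = (2⁻¹ : ℝ) • (x + y) := by
    rw [smul_add]
    norm_num
  rw [hmid] at hftc
  simp only [sub_zero, one_smul, zero_smul, add_zero] at hftc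
  rw [← enorm_neg, neg_sub, ← hftc, intervalIntegral.integral_of_le (by norm_num),
    ← restrict_Ioo_eq_restrict_Ioc]
  exact enorm_integral_le_lintegral_enorm _

lemma lintegral_eq_lintegral_inv_smul_sub {F : ℝ³ → ℝ≥0∞} (hF : Measurable F) {r : ℝ}
    (hr : 0 < r) (v : ℝ³) :
    ∫⁻ x, F x = ∫⁻ z, ENNReal.ofReal (r ^ 3)⁻¹ * F (r⁻¹ • (z - v)) := by
  have h := lintegral_map (μ := (volume : Measure ℝ³)) hF (measurable_const_smul r⁻¹)
  rw [Measure.map_addHaar_smul _ (inv_ne_zero hr.ne'), lintegral_smul_measure] at h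
  rw [lintegral_const_mul' _ _ ENNReal.ofReal_ne_top,
    lintegral_sub_right_eq_self (fun z => F (r⁻¹ • z)) v, ← h, smul_eq_mul, ← mul_assoc,
    ← ENNReal.ofReal_mul (by positivity)]
  have : (r ^ 3)⁻¹ * |((r⁻¹ ^ Module.finrank ℝ ℝ³))⁻¹| = 1 := by
    rw [finrank_euclideanSpace, Fintype.card_fin, abs_of_pos (by positivity)]
    field_simp
  rw [this]
  simp

lemma measurable_gradient (f : ℝ³ → ℝ) : Measurable (gradient f) :=
  (InnerProductSpace.toDual ℝ ℝ³).symm.continuous.measurable.comp (measurable_fderiv ℝ f)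

lemma Convex.setLIntegral_inner_gradient_le {K : Set ℝ³} (hK : Convex ℝ K)
    (hKm : MeasurableSet K) (f : ℝ³ → ℝ) {y : ℝ³} (hy : y ∈ K) {t : ℝ}
    (ht : t ∈ Ioo (0 : ℝ) (1 / 2)) :
    ∫⁻ x in K, ‖inner ℝ (gradient f ((1 - t) • x + t • y)) (y - x)‖ₑ ≤
      ∫⁻ z in K, {q : ℝ | (1 - q)⁻¹ • (z - q • y) ∈ K}.indicator (fun q =>
        ENNReal.ofReal (((1 - q) ^ 4)⁻¹ * |inner ℝ (gradient f z) (y - z)|)) t := by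
  have h1 : 0 < 1 - t := by linarith [ht.2]
  have hg := measurable_gradient f
  rw [← lintegral_indicator hKm, ← lintegral_indicator hKm,
    lintegral_eq_lintegral_inv_smul_sub (Measurable.indicator (by fun_prop) hKm) h1 (t • y)]
  refine lintegral_mono fun z => ?_
  by_cases hx : (1 - t)⁻¹ • (z - t • y) ∈ K
  · have hxz : (1 - t) • ((1 - t)⁻¹ • (z - t • y)) + t • y = z := by
      rw [smul_inv_smul₀ h1.ne', sub_add_cancel]
    have hz : z ∈ K := by
      rw [← hxz]
      exact hK hx hy h1.le ht.1.le (by ring)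
    have hyx : y - (1 - t)⁻¹ • (z - t • y) = (1 - t)⁻¹ • (y - z) := by
      rw [eq_inv_smul_iff₀ h1.ne', smul_sub, smul_inv_smul₀ h1.ne', sub_smul, one_smul]
      abel
    have hmem : t ∈ {q : ℝ | (1 - q)⁻¹ • (z - q • y) ∈ K} := hx
    rw [indicator_of_mem hx, indicator_of_mem hz, indicator_of_mem hmem, hxz, hyx,
      inner_smul_right, Real.enorm_eq_ofReal_abs, ← ENNReal.ofReal_mul (by positivity), abs_mul,
      abs_of_pos (inv_pos.2 h1)]
    refine le_of_eq ?_
    congr 1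
    field_simp
  · rw [indicator_of_notMem hx, mul_zero]
    exact zero_le

lemma Convex.lintegral_lintegral_half_segment_le {K : Set ℝ³} (hK : Convex ℝ K)
    (hKc : IsCompact K) (f : ℝ³ → ℝ) :
    ∫⁻ y in K, ∫⁻ x in K, ∫⁻ t in Ioo (0 : ℝ) (1 / 2),
        ‖inner ℝ (gradient f ((1 - t) • x + t • y)) (y - x)‖ₑ ≤
      ENNReal.ofReal (7 / 3 * (0.3364 * diam K)) * volume K * ∫⁻ z in K, ‖gradient f z‖ₑ := by
  have hKm := hKc.measurableSet
  have hg := measurable_gradient f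
  set Θ : ℝ³ → ℝ³ → ℝ → ℝ≥0∞ := fun y z t =>
    {q : ℝ | (1 - q)⁻¹ • (z - q • y) ∈ K}.indicator (fun q =>
        ENNReal.ofReal (((1 - q) ^ 4)⁻¹ * |inner ℝ (gradient f z) (y - z)|)) t with hΘ
  have hΘm : Measurable fun w : (ℝ³ × ℝ³) × ℝ => Θ w.1.1 w.1.2 w.2 := by
    have hset : MeasurableSet
        {w : (ℝ³ × ℝ³) × ℝ | (1 - w.2)⁻¹ • (w.1.2 - w.2 • w.1.1) ∈ K} :=
      hKm.preimage (by fun_prop)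
    exact Measurable.indicator (f := fun w : (ℝ³ × ℝ³) × ℝ => ENNReal.ofReal
      (((1 - w.2) ^ 4)⁻¹ * |inner ℝ (gradient f w.1.2) (w.1.1 - w.1.2)|)) (by fun_prop) hset
  calc _ = ∫⁻ y in K, ∫⁻ t in Ioo (0 : ℝ) (1 / 2), ∫⁻ x in K,
          ‖inner ℝ (gradient f ((1 - t) • x + t • y)) (y - x)‖ₑ := by
        refine lintegral_congr fun y => lintegral_lintegral_swap ?_
        exact Measurable.aemeasurable (by fun_prop)
    _ ≤ ∫⁻ y in K, ∫⁻ t in Ioo (0 : ℝ) (1 / 2), ∫⁻ z in K, Θ y z t :=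
        setLIntegral_mono' hKm fun y hy => setLIntegral_mono' measurableSet_Ioo fun t ht =>
          hK.setLIntegral_inner_gradient_le hKm f hy ht
    _ = ∫⁻ y in K, ∫⁻ z in K, ∫⁻ t in Ioo (0 : ℝ) (1 / 2), Θ y z t := by
        refine lintegral_congr fun y => lintegral_lintegral_swap ?_
        exact (hΘm.comp (f := fun q : ℝ × ℝ³ => ((y, q.2), q.1)) (by fun_prop)).aemeasurable
    _ = ∫⁻ z in K, ∫⁻ y in K, ∫⁻ t in Ioo (0 : ℝ) (1 / 2), Θ y z t :=
        lintegral_lintegral_swap hΘm.lintegral_prod_right'.aemeasurable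
    _ ≤ ∫⁻ z in K, ENNReal.ofReal (7 / 3 * (0.3364 * diam K)) * volume K * ‖gradient f z‖ₑ := by
        refine setLIntegral_mono' hKm fun z hz => ?_
        refine le_trans (le_of_eq ?_) ((hK.lintegral_kernel_le hKc hz (gradient f z)).trans ?_)
        · refine lintegral_congr fun y => ?_
          have hm : MeasurableSet {q : ℝ | (1 - q)⁻¹ • (z - q • y) ∈ K} :=
            hKm.preimage (by fun_prop)
          rw [setLIntegral_indicator hm, inter_comm]
        · rw [← mul_assoc, ← mul_assoc, ENNReal.ofReal_mul (by positivity), ofReal_norm,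
            mul_right_comm, ← mul_assoc]
    _ = _ := lintegral_const_mul _ (by fun_prop)

/-- The `L¹` Poincaré inequality on a compact convex body, in double integral form. -/
lemma Convex.lintegral_lintegral_enorm_sub_le {K : Set ℝ³} (hK : Convex ℝ K)
    (hKc : IsCompact K) {f : ℝ³ → ℝ} (hf : Differentiable ℝ f) :
    ∫⁻ y in K, ∫⁻ x in K, ‖f x - f y‖ₑ ≤
      ENNReal.ofReal (Real.pi / 2 * diam K) * volume K * ∫⁻ z in K, ‖gradient f z‖ₑ := by
  have hg := measurable_gradient f
  set A : ℝ³ → ℝ³ → ℝ≥0∞ := fun x y => ∫⁻ t in Ioo (0 : ℝ) (1 / 2),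
        ‖inner ℝ (gradient f ((1 - t) • x + t • y)) (y - x)‖ₑ with hA
  have hAm : Measurable fun w : ℝ³ × ℝ³ => A w.1 w.2 :=
    Measurable.lintegral_prod_right' (f := fun w : (ℝ³ × ℝ³) × ℝ =>
      ‖inner ℝ (gradient f ((1 - w.2) • w.1.1 + w.2 • w.1.2)) (w.1.2 - w.1.1)‖ₑ) (by fun_prop)
  have hsub : ∀ x y, ‖f x - f y‖ₑ ≤ A x y + A y x := by
    intro x y
    have hy := enorm_sub_midpoint_le_lintegral hf y x
    rw [← enorm_neg, neg_sub, add_comm y x] at hy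
    calc ‖f x - f y‖ₑ
        = ‖(f x - f ((2⁻¹ : ℝ) • (x + y))) + (f ((2⁻¹ : ℝ) • (x + y)) - f y)‖ₑ := by
          rw [sub_add_sub_cancel]
      _ ≤ _ := (enorm_add_le _ _).trans (add_le_add (enorm_sub_midpoint_le_lintegral hf x y) hy)
  have hJ := hK.lintegral_lintegral_half_segment_le hKc f
  calc ∫⁻ y in K, ∫⁻ x in K, ‖f x - f y‖ₑ
      ≤ ∫⁻ y in K, ∫⁻ x in K, (A x y + A y x) :=
        lintegral_mono fun y => lintegral_mono fun x => hsub x y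
    _ = (∫⁻ y in K, ∫⁻ x in K, A x y) + ∫⁻ y in K, ∫⁻ x in K, A y x := by
        rw [← lintegral_add_left]
        · refine lintegral_congr fun y => lintegral_add_left ?_ _
          exact hAm.comp (f := fun x => (x, y)) (by fun_prop)
        · exact hAm.lintegral_prod_left'
    _ = 2 * ∫⁻ y in K, ∫⁻ x in K, A x y := by
        rw [two_mul]
        congr 1
        exact lintegral_lintegral_swap hAm.aemeasurable
    _ ≤ 2 * (ENNReal.ofReal (7 / 3 * (0.3364 * diam K)) * volume K *
          ∫⁻ z in K, ‖gradient f z‖ₑ) := by gcongr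
    _ = ENNReal.ofReal (2 * (7 / 3 * (0.3364 * diam K))) * volume K *
          ∫⁻ z in K, ‖gradient f z‖ₑ := by
        rw [ENNReal.ofReal_mul zero_le_two, ENNReal.ofReal_ofNat, mul_assoc, mul_assoc, mul_assoc]
    _ ≤ _ := by
        gcongr ENNReal.ofReal ?_ * _ * _
        nlinarith [Real.pi_gt_d4, diam_nonneg (s := K)]

/-- The `L¹` Poincaré inequality on a bounded convex set. -/
lemma Convex.lintegral_enorm_sub_average_le {C : Set ℝ³} (hC : Convex ℝ C)
    (hCb : Bornology.IsBounded C) (hC0 : volume C ≠ 0) {f : ℝ³ → ℝ}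
    (hf : Differentiable ℝ f) (hfi : IntegrableOn f C) :
    ∫⁻ x in C, ‖f x - (volume C).toReal⁻¹ * ∫ y in C, f y‖ₑ ≤
      ENNReal.ofReal (Real.pi / 2 * diam C) * ∫⁻ z in C, ‖gradient f z‖ₑ := by
  have hae : closure C =ᵐ[volume] C := by
    refine Filter.EventuallyLE.antisymm ?_ subset_closure.eventuallyLE
    rw [ae_le_set]
    exact measure_mono_null (sdiff_subset_sdiff_right interior_subset) (hC.addHaar_frontier volume)
  have hvt : volume C ≠ ⊤ := hCb.measure_lt_top.ne
  have hreal : (volume C).toReal ≠ 0 := ENNReal.toReal_ne_zero.2 ⟨hC0, hvt⟩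
  have hdouble := hC.closure.lintegral_lintegral_enorm_sub_le hCb.isCompact_closure hf
  simp only [Measure.restrict_congr_set hae, measure_congr hae, diam_closure] at hdouble
  have : IsFiniteMeasure (volume.restrict C) := isFiniteMeasure_restrict.2 hvt
  have hpt : ∀ x, volume C * ‖f x - (volume C).toReal⁻¹ * ∫ y in C, f y‖ₑ ≤
      ∫⁻ y in C, ‖f y - f x‖ₑ := by
    intro x
    have hsub : ∫ y in C, (f y - f x) =
        -((volume C).toReal * (f x - (volume C).toReal⁻¹ * ∫ y in C, f y)) := by
      rw [integral_sub hfi (integrable_const _), mul_sub, mul_inv_cancel_left₀ hreal]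
      simp [Measure.real]
    have hle := enorm_integral_le_lintegral_enorm (μ := volume.restrict C) fun y => f y - f x
    rw [hsub, enorm_neg, enorm_mul, Real.enorm_of_nonneg ENNReal.toReal_nonneg,
      ENNReal.ofReal_toReal hvt] at hle
    exact hle
  rw [← ENNReal.mul_le_mul_iff_right hC0 hvt, ← lintegral_const_mul' _ _ hvt]
  calc _ ≤ ∫⁻ x in C, ∫⁻ y in C, ‖f y - f x‖ₑ := lintegral_mono hpt
    _ ≤ _ := hdouble
    _ = _ := by ring

lemma integral_norm_gradient_le {ρ : ℝ³ → ℝ} (hρ0 : ∀ x, 0 ≤ ρ x) (hρint : Integrable ρ)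
    {G : ℝ³ → ℝ³} (hG2 : Integrable fun x => ‖G x‖ ^ 2)
    (hgrad : ∀ x, gradient ρ x = (2 * Real.sqrt (ρ x)) • G x) :
    ∫ x, ‖gradient ρ x‖ ≤ 2 * Real.sqrt (∫ x, ρ x) * Real.sqrt (∫ x, ‖G x‖ ^ 2) := by
  have hGm : AEStronglyMeasurable (fun x => ‖G x‖) := by
    have := (Real.continuous_sqrt.comp_aestronglyMeasurable hG2.aestronglyMeasurable)
    simpa [Function.comp_def, Real.sqrt_sq] using this
  have hρm : AEStronglyMeasurable (fun x => Real.sqrt (ρ x)) :=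
    Real.continuous_sqrt.comp_aestronglyMeasurable hρint.aestronglyMeasurable
  have h1 : MemLp (fun x => Real.sqrt (ρ x)) (ENNReal.ofReal 2) := by
    rw [ENNReal.ofReal_ofNat, memLp_two_iff_integrable_sq hρm]
    simpa [Real.sq_sqrt (hρ0 _)] using hρint
  have h2 : MemLp (fun x => ‖G x‖) (ENNReal.ofReal 2) := by
    rw [ENNReal.ofReal_ofNat, memLp_two_iff_integrable_sq hGm]
    exact hG2
  have hCS := integral_mul_le_Lp_mul_Lq_of_nonneg Real.HolderConjugate.two_two
    (ae_of_all _ fun x => Real.sqrt_nonneg (ρ x)) (ae_of_all _ fun x => norm_nonneg (G x)) h1 h2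
  simp only [Real.rpow_two, Real.sq_sqrt (hρ0 _), ← Real.sqrt_eq_rpow] at hCS
  have heq : ∀ x, ‖gradient ρ x‖ = 2 * (Real.sqrt (ρ x) * ‖G x‖) := fun x => by
    rw [hgrad, norm_smul, Real.norm_of_nonneg (by positivity), mul_assoc]
  simp_rw [heq]
  rw [integral_const_mul, mul_assoc]
  gcongr




/-- Quantitative coarse-graining bound: if `ρ : ℝ³ → [0,∞)` has `∫ ρ = N`, `√ρ ∈ H¹` with
gradient `G` (so `∇ρ = 2 √ρ G`, integrable), the intrinsic energy satisfies
`F ≥ c ∫ ‖G‖²` with `c > 0`, and `π_n ρ` is the cell average of `ρ` over a countable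
partition into bounded convex cells of diameter at most `D_n`, then
`‖ρ − π_n ρ‖₁ ≤ (π/2) D_n · 2√N · √(F/c)`. -/
theorem stmt11 {ι : Type*} [Countable ι]
    (ρ : EuclideanSpace ℝ (Fin 3) → ℝ) (N c F : ℝ) (hc : 0 < c)
    (hρ0 : ∀ x, 0 ≤ ρ x) (hρint : Integrable ρ) (hN : ∫ x, ρ x = N)
    (hρd : Differentiable ℝ ρ)
    (G : EuclideanSpace ℝ (Fin 3) → EuclideanSpace ℝ (Fin 3))
    (hG2 : Integrable (fun x => ‖G x‖ ^ 2))
    (hgrad : ∀ x, gradient ρ x = (2 * Real.sqrt (ρ x)) • G x)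
    (hgradint : Integrable (fun x => ‖gradient ρ x‖))
    (hF : c * ∫ x, ‖G x‖ ^ 2 ≤ F)
    (C : ι → Set (EuclideanSpace ℝ (Fin 3)))
    (hCm : ∀ i, MeasurableSet (C i))
    (hCb : ∀ i, Bornology.IsBounded (C i))
    (hCc : ∀ i, Convex ℝ (C i))
    (hCd : Pairwise (Function.onFun Disjoint C))
    (hCu : (⋃ i, C i) = Set.univ)
    (hC0 : ∀ i, 0 < volume (C i)) (hCt : ∀ i, volume (C i) < ⊤)
    (Dn : ℝ) (hdiam : ∀ i, Metric.diam (C i) ≤ Dn)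
    (πρ : EuclideanSpace ℝ (Fin 3) → ℝ)
    (hπ : ∀ i, ∀ x ∈ C i, πρ x = (volume (C i)).toReal⁻¹ * ∫ y in C i, ρ y) :
    ∫ x, |ρ x - πρ x| ≤ (Real.pi / 2) * Dn * (2 * Real.sqrt N) * Real.sqrt (F / c) := by

  have hne : Nonempty ι := by
    obtain ⟨i, -⟩ := mem_iUnion.1 (hCu ▸ mem_univ (0 : ℝ³))
    exact ⟨i⟩
  have hDn : 0 ≤ Dn := diam_nonneg.trans (hdiam (Classical.arbitrary ι))
  have hcell : ∀ i, ∫⁻ x in C i, ‖ρ x - πρ x‖ₑ ≤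
      ENNReal.ofReal (Real.pi / 2 * Dn) * ∫⁻ x in C i, ‖gradient ρ x‖ₑ := by
    intro i
    calc ∫⁻ x in C i, ‖ρ x - πρ x‖ₑ
        = ∫⁻ x in C i, ‖ρ x - (volume (C i)).toReal⁻¹ * ∫ y in C i, ρ y‖ₑ :=
          setLIntegral_congr_fun (hCm i) fun x hx => by simp only [hπ i x hx]
      _ ≤ ENNReal.ofReal (Real.pi / 2 * diam (C i)) * ∫⁻ x in C i, ‖gradient ρ x‖ₑ :=
          (hCc i).lintegral_enorm_sub_average_le (hCb i) (hC0 i).ne' hρd hρint.integrableOn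
      _ ≤ _ := by
          gcongr
          exact hdiam i
  have htotal : ∫⁻ x, ‖ρ x - πρ x‖ₑ ≤
      ENNReal.ofReal (Real.pi / 2 * Dn) * ∫⁻ x, ‖gradient ρ x‖ₑ := by
    rw [← setLIntegral_univ, ← setLIntegral_univ (fun x => ‖gradient ρ x‖ₑ), ← hCu,
      lintegral_iUnion hCm hCd, lintegral_iUnion hCm hCd, ← ENNReal.tsum_mul_left]
    exact ENNReal.tsum_le_tsum hcell
  have hgradL : ∫⁻ x, ‖gradient ρ x‖ₑ = ENNReal.ofReal (∫ x, ‖gradient ρ x‖) := by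
    rw [ofReal_integral_eq_lintegral_ofReal hgradint (ae_of_all _ fun x => norm_nonneg _)]
    simp only [ofReal_norm]
  have hL1 : ∫ x, |ρ x - πρ x| ≤ Real.pi / 2 * Dn * ∫ x, ‖gradient ρ x‖ := by
    have hnn : 0 ≤ Real.pi / 2 * Dn * ∫ x, ‖gradient ρ x‖ :=
      mul_nonneg (by positivity) (integral_nonneg fun x => norm_nonneg _)
    rw [← ENNReal.ofReal_le_ofReal_iff hnn, ENNReal.ofReal_mul (by positivity), ← hgradL,
      ← Real.enorm_of_nonneg (integral_nonneg fun x => abs_nonneg (ρ x - πρ x))]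
    refine (enorm_integral_le_lintegral_enorm _).trans ?_
    simpa only [Real.enorm_eq_ofReal_abs, abs_abs] using htotal
  have hGF : ∫ x, ‖G x‖ ^ 2 ≤ F / c := by
    rw [le_div_iff₀ hc]
    linarith
  calc ∫ x, |ρ x - πρ x| ≤ Real.pi / 2 * Dn * ∫ x, ‖gradient ρ x‖ := hL1
    _ ≤ Real.pi / 2 * Dn * (2 * Real.sqrt N * Real.sqrt (F / c)) := by
        gcongr
        refine (integral_norm_gradient_le hρ0 hρint hG2 hgrad).trans ?_
        rw [hN]
        gcongr
    _ = _ := by ring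
end
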